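/- Let K be a number field and h ≥ 2 an integer. Then ∑_{𝔪 ∈ 𝒩_h(x)} ω(𝔪) = κ_K·γ_h·x^{1/h}·log log x + κ_K·γ_h·𝔇₁·x^{1/h} + O_h(x^{1/h}/log x) as the real number x → ∞, where the implied constant depends only on h and K. -/

import Mathlib

open Filter Topology Asymptotics NumberField

noncomputable section

/-- The number of distinct (nonzero) prime ideals dividing the ideal `I`. -/
def omegaK {K : Type*} [Field K] [NumberField K] (I : Ideal (𝓞 K)) : ℕ :=
  {p : Ideal (𝓞 K) | p.IsPrime ∧ p ≠ ⊥ ∧ p ∣ I}.ncard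

/-- The ideal `I` is `h`-free: no prime ideal divides it to order `h`. -/
def HFreeI {K : Type*} [Field K] [NumberField K] (h : ℕ) (I : Ideal (𝓞 K)) : Prop :=
  ∀ p : Ideal (𝓞 K), p.IsPrime → p ≠ ⊥ → ¬ p ^ h ∣ I

/-- The ideal `I` is `h`-full: every prime ideal dividing it divides it to
order at least `h`. -/
def HFullI {K : Type*} [Field K] [NumberField K] (h : ℕ) (I : Ideal (𝓞 K)) : Prop :=
  ∀ p : Ideal (𝓞 K), p.IsPrime → p ≠ ⊥ → p ∣ I → p ^ h ∣ I

/-- The ideal-counting constant `κ_K = 2^{r₁} (2π)^{r₂} h_K R_K / (w_K √|d_K|)`. -/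
def kappaK (K : Type*) [Field K] [NumberField K] : ℝ :=
  (2 ^ InfinitePlace.nrRealPlaces K * (2 * Real.pi) ^ InfinitePlace.nrComplexPlaces K *
      (classNumber K) * Units.regulator K) /
    ((Units.torsionOrder K : ℕ) * Real.sqrt |(discr K : ℝ)|)

/-- The Dedekind zeta value `ζ_K(h) = ∑_{𝔞 ≠ 0} N(𝔞)^{-h}`. -/
def zetaK (K : Type*) [Field K] [NumberField K] (h : ℕ) : ℝ :=
  ∑' I : {I : Ideal (𝓞 K) // I ≠ ⊥}, 1 / (Ideal.absNorm I.val : ℝ) ^ h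

/-- `A` is the Mertens constant `𝔄` for the prime ideals of `K`:
`𝔄 = lim (∑_{N(𝔭) ≤ x} 1/N(𝔭) − log log x)`. -/
def MertensK (K : Type*) [Field K] [NumberField K] (A : ℝ) : Prop :=
  Tendsto (fun x : ℝ =>
      (∑ᶠ p ∈ {p : Ideal (𝓞 K) | p.IsPrime ∧ p ≠ ⊥ ∧ (Ideal.absNorm p : ℝ) ≤ x},
        1 / (Ideal.absNorm p : ℝ)) - Real.log (Real.log x))
    atTop (𝓝 A)

/-- The constant `𝔅 = -π²/6`. -/
def BconstK : ℝ := -(Real.pi ^ 2) / 6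

/-- The constant `ℭ₁` for `K`, given the Mertens constant `A`. -/
def C1K (K : Type*) [Field K] [NumberField K] (h : ℕ) (A : ℝ) : ℝ :=
  A - ∑' p : {p : Ideal (𝓞 K) // p.IsPrime ∧ p ≠ ⊥},
    ((Ideal.absNorm p.val : ℝ) - 1) /
      ((Ideal.absNorm p.val : ℝ) * ((Ideal.absNorm p.val : ℝ) ^ h - 1))

/-- The constant `ℭ₂` for `K`, given the Mertens constant `A`. -/
def C2K (K : Type*) [Field K] [NumberField K] (h : ℕ) (A : ℝ) : ℝ :=
  C1K K h A ^ 2 + C1K K h A + BconstK -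
    ∑' p : {p : Ideal (𝓞 K) // p.IsPrime ∧ p ≠ ⊥},
      (((Ideal.absNorm p.val : ℝ) ^ (h - 1) - 1) /
        ((Ideal.absNorm p.val : ℝ) ^ h - 1)) ^ 2

/-- The constant `γ_h` for `K`. -/
def gammaK (K : Type*) [Field K] [NumberField K] (h : ℕ) : ℝ :=
  ∏' p : {p : Ideal (𝓞 K) // p.IsPrime ∧ p ≠ ⊥},
    (1 + ((Ideal.absNorm p.val : ℝ) - (Ideal.absNorm p.val : ℝ) ^ (1 / (h : ℝ))) /
      ((Ideal.absNorm p.val : ℝ) ^ 2 *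
        ((Ideal.absNorm p.val : ℝ) ^ (1 / (h : ℝ)) - 1)))

/-- The convergent series `𝔏_h(r)` for `K`. -/
def LhK (K : Type*) [Field K] [NumberField K] (h : ℕ) (r : ℝ) : ℝ :=
  ∑' p : {p : Ideal (𝓞 K) // p.IsPrime ∧ p ≠ ⊥},
    1 / ((Ideal.absNorm p.val : ℝ) ^ (r / (h : ℝ) - 1) *
      ((Ideal.absNorm p.val : ℝ) -
        (Ideal.absNorm p.val : ℝ) ^ (1 - 1 / (h : ℝ)) + 1))

/-- The constant `𝔇₁` for `K`, given the Mertens constant `A`. -/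
def D1K (K : Type*) [Field K] [NumberField K] (h : ℕ) (A : ℝ) : ℝ :=
  A - Real.log (h : ℝ) + LhK K h ((h : ℝ) + 1) - LhK K h (2 * (h : ℝ))

/-- The constant `𝔇₂` for `K`, given the Mertens constant `A`. -/
def D2K (K : Type*) [Field K] [NumberField K] (h : ℕ) (A : ℝ) : ℝ :=
  D1K K h A ^ 2 + D1K K h A + BconstK -
    ∑' p : {p : Ideal (𝓞 K) // p.IsPrime ∧ p ≠ ⊥},
      ((Ideal.absNorm p.val : ℝ) -
        (Ideal.absNorm p.val : ℝ) ^ (1 - 1 / (h : ℝ)) + 1)⁻¹ ^ 2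

/-!
Counting ideals class by class through lattice points in a dilated body with thin boundary gives
`κ_K s + O(s ^ θ)` nonzero ideals of norm at most `s`, for some `θ < 1`. All further input is
multiplicative, so we work in a free commutative monoid on a set of normed primes. There the count
of elements and Chebyshev's bound give both Mertens theorems with error terms, hence the average of
`ω` over the elements of norm at most `y`, counted with the primes of a fixed element `b` adjoined.

Every `h`-full element is uniquely `h • a + b` with all nonzero exponents of `b` strictly between
`h` and `2 * h`, and its prime divisors are those of `a` together with those of `b`. Here `a` has
norm at most `(x / ‖b‖) ^ (1 / h)`, so summing the averages over `b` produces `x ^ (1 / h)` times a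
sum with weights `‖b‖ ^ (-1 / h)`. Its Euler product is `γ_h`, and the adjoined primes contribute
`𝔏_h (h + 1) - 𝔏_h (2 h)`.
-/

section LatticePoints

open MeasureTheory Module Pointwise

variable {E : Type*} [NormedAddCommGroup E] [NormedSpace ℝ E] {ι : Type*}

/-- The closed `ε`-neighbourhood of the frontier of `D` has measure `O(ε)`. This is the regularity
under which the number of lattice points in `t • D` is known up to `O(t ^ (n - 1))`. -/
def HasThinFrontier [MeasurableSpace E] (μ : Measure E) (D : Set E) : Prop :=
  ∃ C : ℝ, ∀ ε : ℝ, 0 < ε → ε ≤ 1 → μ.real (Metric.cthickening ε (frontier D)) ≤ C * ε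

/-- The points of the lattice spanned by `b` that lie in `t • D`. -/
def latticePoints (b : Basis ι ℝ E) (D : Set E) (t : ℝ) : Set E :=
  {a | a ∈ Submodule.span ℤ (Set.range b) ∧ t⁻¹ • a ∈ D}

/-- The union of the cells `t⁻¹ • (a + F)` attached to the lattice points `a` in `t • D`, where `F`
is the fundamental domain of `b`: the cell containing `x` is the one of the floor of `t • x`. -/
def latticeCells [Fintype ι] (b : Basis ι ℝ E) (D : Set E) (t : ℝ) : Set E :=
  {x | t⁻¹ • (ZSpan.floor b (t • x) : E) ∈ D}

lemma mem_inv_smul_vadd_fundamentalDomain_iff [Fintype ι] (b : Basis ι ℝ E) {t : ℝ} (ht : t ≠ 0)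
    {a : E} (ha : a ∈ Submodule.span ℤ (Set.range b)) (x : E) :
    x ∈ t⁻¹ • (a +ᵥ ZSpan.fundamentalDomain b) ↔ (ZSpan.floor b (t • x) : E) = a := by
  rw [Set.mem_smul_set_iff_inv_smul_mem₀ (inv_ne_zero ht), inv_inv,
    Set.mem_vadd_set_iff_neg_vadd_mem, vadd_eq_add, ← ZSpan.fract_eq_self,
    ZSpan.fract_zSpan_add b _ (neg_mem ha), ZSpan.fract_apply, neg_add_eq_sub, sub_right_inj]

lemma latticeCells_eq_biUnion [Fintype ι] (b : Basis ι ℝ E) (D : Set E) {t : ℝ} (ht : t ≠ 0) :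
    latticeCells b D t =
      ⋃ a ∈ latticePoints b D t, t⁻¹ • (a +ᵥ ZSpan.fundamentalDomain b) := by
  ext x
  simp only [Set.mem_iUnion, exists_prop]
  constructor
  · intro hx
    have hfloor := (ZSpan.floor b (t • x)).2
    exact ⟨_, ⟨hfloor, hx⟩, (mem_inv_smul_vadd_fundamentalDomain_iff b ht hfloor x).2 rfl⟩
  · rintro ⟨a, ⟨ha, haD⟩, hx⟩
    rw [← (mem_inv_smul_vadd_fundamentalDomain_iff b ht ha x).1 hx] at haD
    exact haD

lemma finite_latticePoints [Finite ι] [FiniteDimensional ℝ E] (b : Basis ι ℝ E) {D : Set E}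
    (hD : Bornology.IsBounded D) {t : ℝ} (ht : t ≠ 0) : (latticePoints b D t).Finite :=
  (ZSpan.setFinite_inter b (hD.smul₀ t)).subset fun _ ⟨ha, haD⟩ =>
    ⟨(Set.mem_smul_set_iff_inv_smul_mem₀ ht _ _).2 haD, ha⟩

lemma symmDiff_latticeCells_subset [Fintype ι] [FiniteDimensional ℝ E] (b : Basis ι ℝ E)
    (D : Set E) {R : ℝ} (hR : ∀ x ∈ ZSpan.fundamentalDomain b, ‖x‖ ≤ R) {t : ℝ} (ht : 0 < t) :
    symmDiff (latticeCells b D t) D ⊆ Metric.cthickening (R / t) (frontier D) := by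
  have near_frontier : ∀ (S : Set E) (x y : E), x ∉ S → y ∈ S → dist x y ≤ R / t →
      x ∈ Metric.cthickening (R / t) (frontier S) := by
    intro S x y hx hy hxy
    obtain ⟨z, hz, hxz⟩ := exists_mem_frontier_infDist_compl_eq_dist (s := Sᶜ) hx
      (fun h => (h ▸ Set.mem_univ y : y ∈ Sᶜ) hy)
    rw [frontier_compl] at hz
    rw [compl_compl] at hxz
    exact Metric.mem_cthickening_of_dist_le x z _ _ hz
      (hxz ▸ (Metric.infDist_le_dist_of_mem hy).trans hxy)
  have dist_floor : ∀ x, dist x (t⁻¹ • (ZSpan.floor b (t • x) : E)) ≤ R / t := by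
    intro x
    have hfract : x - t⁻¹ • (ZSpan.floor b (t • x) : E) = t⁻¹ • ZSpan.fract b (t • x) := by
      rw [ZSpan.fract_apply, smul_sub, inv_smul_smul₀ ht.ne']
    rw [dist_eq_norm, hfract, norm_smul, norm_inv, Real.norm_of_nonneg ht.le, div_eq_inv_mul]
    gcongr
    exact hR _ (ZSpan.fract_mem_fundamentalDomain b _)
  rintro x (⟨hxU, hxD⟩ | ⟨hxD, hxU⟩)
  · exact near_frontier D x _ hxD hxU (dist_floor x)
  · rw [← frontier_compl]
    exact near_frontier Dᶜ x _ (not_not.2 hxD) hxU (dist_floor x)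

variable [FiniteDimensional ℝ E] [MeasurableSpace E] [BorelSpace E]

lemma measurableSet_inv_smul_vadd_fundamentalDomain [Finite ι] (b : Basis ι ℝ E) (t : ℝ) (a : E) :
    MeasurableSet (t⁻¹ • (a +ᵥ ZSpan.fundamentalDomain b)) :=
  ((ZSpan.fundamentalDomain_measurableSet b).const_vadd a).const_smul₀ t⁻¹

lemma measurableSet_latticeCells [Fintype ι] (b : Basis ι ℝ E) {D : Set E}
    (hD : Bornology.IsBounded D) {t : ℝ} (ht : t ≠ 0) :
    MeasurableSet (latticeCells b D t) := by
  rw [latticeCells_eq_biUnion b D ht]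
  exact (finite_latticePoints b hD ht).measurableSet_biUnion fun a _ =>
    measurableSet_inv_smul_vadd_fundamentalDomain b t a

variable (μ : Measure E) [μ.IsAddHaarMeasure]

lemma measure_latticeCells [Fintype ι] (b : Basis ι ℝ E) {D : Set E}
    (hD : Bornology.IsBounded D) {t : ℝ} (ht : 0 < t) :
    μ (latticeCells b D t) = Nat.card (latticePoints b D t) *
      (ENNReal.ofReal (t⁻¹ ^ finrank ℝ E) * μ (ZSpan.fundamentalDomain b)) := by
  have hfin := finite_latticePoints b hD ht.ne'
  have hdisjoint : (latticePoints b D t).PairwiseDisjoint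
      fun a => t⁻¹ • (a +ᵥ ZSpan.fundamentalDomain b) := by
    intro a ha a' ha' hne
    refine Set.disjoint_left.2 fun x hx hx' => hne ?_
    rw [← (mem_inv_smul_vadd_fundamentalDomain_iff b ht.ne' ha.1 x).1 hx,
      (mem_inv_smul_vadd_fundamentalDomain_iff b ht.ne' ha'.1 x).1 hx']
  have hcell (a : E) : μ (t⁻¹ • (a +ᵥ ZSpan.fundamentalDomain b)) =
      ENNReal.ofReal (t⁻¹ ^ finrank ℝ E) * μ (ZSpan.fundamentalDomain b) := by
    rw [Measure.addHaar_smul_of_nonneg μ (by positivity), measure_vadd]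
  rw [latticeCells_eq_biUnion b D ht.ne', measure_biUnion hfin.countable hdisjoint
    fun a _ => measurableSet_inv_smul_vadd_fundamentalDomain b t a]
  simp only [hcell]
  have := hfin.to_subtype
  rw [ENNReal.tsum_const, ENat.card_eq_coe_natCard, ENat.toENNReal_coe]

lemma measureReal_latticeCells [Fintype ι] (b : Basis ι ℝ E) {D : Set E}
    (hD : Bornology.IsBounded D) {t : ℝ} (ht : 0 < t) :
    μ.real (latticeCells b D t) = Nat.card (latticePoints b D t) *
      (t⁻¹ ^ finrank ℝ E * μ.real (ZSpan.fundamentalDomain b)) := by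
  rw [measureReal_def, measure_latticeCells μ b hD ht, ENNReal.toReal_mul, ENNReal.toReal_mul,
    ENNReal.toReal_natCast, ENNReal.toReal_ofReal (by positivity), measureReal_def]

lemma abs_measureReal_latticeCells_sub_le [Fintype ι] (b : Basis ι ℝ E) {D : Set E}
    (hD : Bornology.IsBounded D) (hDmeas : MeasurableSet D) {R t : ℝ}
    (hR : ∀ x ∈ ZSpan.fundamentalDomain b, ‖x‖ ≤ R) (ht : 0 < t) :
    |μ.real (latticeCells b D t) - μ.real D| ≤
      μ.real (Metric.cthickening (R / t) (frontier D)) := by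
  have hcells : μ (latticeCells b D t) ≠ ⊤ := by
    rw [measure_latticeCells μ b hD ht]
    exact ENNReal.mul_ne_top (ENNReal.natCast_ne_top _) (ENNReal.mul_ne_top ENNReal.ofReal_ne_top
      (ZSpan.fundamentalDomain_isBounded b).measure_lt_top.ne)
  have hfrontier : μ (Metric.cthickening (R / t) (frontier D)) ≠ ⊤ :=
    (hD.closure.subset frontier_subset_closure).cthickening.measure_lt_top.ne
  exact (abs_measureReal_sub_le_measureReal_symmDiff'
    (measurableSet_latticeCells b hD ht.ne').nullMeasurableSet
    hDmeas.nullMeasurableSet hcells hD.measure_lt_top.ne).trans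
    (measureReal_mono (symmDiff_latticeCells_subset b D hR ht) hfrontier)

theorem card_latticePoints_sub_isBigO [Finite ι] (b : Basis ι ℝ E) {D : Set E}
    (hD : Bornology.IsBounded D) (hDmeas : MeasurableSet D) (hthin : HasThinFrontier μ D) :
    (fun t : ℝ => (Nat.card (latticePoints b D t) : ℝ) -
        μ.real D / μ.real (ZSpan.fundamentalDomain b) * t ^ finrank ℝ E)
      =O[atTop] fun t => t ^ finrank ℝ E / t := by
  cases nonempty_fintype ι
  obtain ⟨C, hC⟩ := hthin
  set F := ZSpan.fundamentalDomain b
  have hFbdd : Bornology.IsBounded F := ZSpan.fundamentalDomain_isBounded b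
  obtain ⟨R, hRpos, hR⟩ := hFbdd.exists_pos_norm_le
  have hF : 0 < μ.real F :=
    ENNReal.toReal_pos (ZSpan.measure_fundamentalDomain_ne_zero b) hFbdd.measure_lt_top.ne
  refine IsBigO.of_bound (C * R / μ.real F) ?_
  filter_upwards [eventually_ge_atTop R] with t ht
  have ht0 : 0 < t := hRpos.trans_le ht
  have hdiff : |μ.real (latticeCells b D t) - μ.real D| ≤ C * (R / t) :=
    (abs_measureReal_latticeCells_sub_le μ b hD hDmeas hR ht0).trans
      (hC _ (by positivity) ((div_le_one ht0).2 ht))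
  rw [measureReal_latticeCells μ b hD ht0] at hdiff
  have hscale : (Nat.card (latticePoints b D t) : ℝ) - μ.real D / μ.real F * t ^ finrank ℝ E =
      (Nat.card (latticePoints b D t) * (t⁻¹ ^ finrank ℝ E * μ.real F) - μ.real D) *
        (t ^ finrank ℝ E / μ.real F) := by
    rw [inv_pow]
    field_simp
  rw [hscale, norm_mul, Real.norm_eq_abs, Real.norm_of_nonneg (by positivity),
    Real.norm_of_nonneg (by positivity)]
  calc _ ≤ C * (R / t) * (t ^ finrank ℝ E / μ.real F) := by gcongr
    _ = _ := by field_simp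

end LatticePoints

section LipschitzImage

open MeasureTheory

variable {ι : Type*}

/-- The boundary of the unit cube `[0, 1] ^ ι`. -/
def unitCubeBoundary (ι : Type*) : Set (ι → ℝ) :=
  {z | z ∈ Set.Icc (0 : ι → ℝ) 1 ∧ ∃ i, z i = 0 ∨ z i = 1}

/-- The point with coordinates `k i / M`. -/
def gridPoint (M : ℕ) (k : ι → Fin (M + 1)) : ι → ℝ := fun i => (k i : ℕ) / (M : ℝ)

open Classical in
/-- The indices `k` of the grid points `gridPoint M k` on the boundary of the unit cube. -/
def gridBoundary (ι : Type*) [Fintype ι] (M : ℕ) : Finset (ι → Fin (M + 1)) :=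
  {k | ∃ i, k i = 0 ∨ k i = Fin.last M}

lemma gridPoint_mem_Icc (M : ℕ) (k : ι → Fin (M + 1)) :
    gridPoint M k ∈ Set.Icc (0 : ι → ℝ) 1 := by
  refine ⟨fun i => by simp only [gridPoint, Pi.zero_apply]; positivity, fun i => ?_⟩
  exact div_le_one_of_le₀ (Nat.cast_le.2 (Nat.lt_succ_iff.1 (k i).2)) (Nat.cast_nonneg M)

variable [Fintype ι]

lemma card_gridBoundary_le (M : ℕ) :
    (gridBoundary ι M).card ≤ Fintype.card ι * (2 * (M + 1) ^ (Fintype.card ι - 1)) := by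
  classical
  have hface (i : ι) (v : Fin (M + 1)) :
      ({k | k i = v} : Finset (ι → Fin (M + 1))).card = (M + 1) ^ (Fintype.card ι - 1) := by
    rw [← Fintype.piFinset_univ,
      Fintype.card_filter_piFinset_const_eq_of_mem _ _ (Finset.mem_univ v), Finset.card_univ,
      Fintype.card_fin]
  have hfaces (i : ι) : ({k | k i = 0 ∨ k i = Fin.last M} : Finset (ι → Fin (M + 1))).card ≤
      2 * (M + 1) ^ (Fintype.card ι - 1) := by
    rw [Finset.filter_or]
    refine (Finset.card_union_le _ _).trans_eq ?_
    rw [hface, hface, two_mul]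
  have hcover : gridBoundary ι M ⊆ Finset.univ.biUnion fun i : ι =>
      ({k | k i = 0 ∨ k i = Fin.last M} : Finset (ι → Fin (M + 1))) := by
    intro k hk
    simpa [gridBoundary] using hk
  exact (Finset.card_le_card hcover).trans
    (Finset.card_biUnion_le_card_mul _ _ _ fun i _ => hfaces i)

lemma exists_mem_gridBoundary_dist_le {M : ℕ} (hM : 0 < M) {z : ι → ℝ}
    (hz : z ∈ unitCubeBoundary ι) : ∃ k ∈ gridBoundary ι M, dist z (gridPoint M k) ≤ 1 / M := by
  obtain ⟨⟨hz0, hz1⟩, i, hi⟩ := hz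
  have hMpos : (0 : ℝ) < M := Nat.cast_pos.2 hM
  have hfloor (j : ι) : ⌊z j * M⌋₊ < M + 1 := by
    have hle := Nat.floor_mono (mul_le_of_le_one_left hMpos.le (hz1 j))
    rwa [Nat.floor_natCast, ← Nat.lt_succ_iff] at hle
  refine ⟨fun j => ⟨⌊z j * M⌋₊, hfloor j⟩, ?_, ?_⟩
  · simp only [gridBoundary, Finset.mem_filter, Finset.mem_univ, true_and]
    exact ⟨i, hi.imp (fun h => by ext; simp [h]) (fun h => by ext; simp [h])⟩
  · refine (dist_pi_le_iff (by positivity)).2 fun j => ?_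
    have hnonneg : 0 ≤ z j * M := mul_nonneg (hz0 j) hMpos.le
    have hcoord : z j - ⌊z j * M⌋₊ / M = (z j * M - ⌊z j * M⌋₊) / M := by
      field_simp
    rw [Real.dist_eq, gridPoint, hcoord, abs_div, abs_of_pos hMpos,
      abs_of_nonneg (sub_nonneg.2 (Nat.floor_le hnonneg))]
    gcongr
    linarith [Nat.lt_floor_add_one (z j * M)]

lemma cthickening_image_unitCubeBoundary_subset {X : Type*} [PseudoMetricSpace X]
    {Ψ : (ι → ℝ) → X} {L : NNReal} (hΨ : LipschitzOnWith L Ψ (Set.Icc 0 1)) {ε : ℝ} (hε : 0 < ε)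
    {M : ℕ} (hM : 1 / ε ≤ M) :
    Metric.cthickening ε (Ψ '' unitCubeBoundary ι) ⊆
      ⋃ k ∈ gridBoundary ι M, Metric.closedBall (Ψ (gridPoint M k)) ((L + 2) * ε) := by
  intro x hx
  obtain ⟨_, ⟨z, hz, rfl⟩, hxz⟩ := Metric.mem_thickening_iff.1
    (Metric.cthickening_subset_thickening' (by positivity) (by linarith : ε < 2 * ε) _ hx)
  have hMpos : (0 : ℝ) < M := (by positivity : 0 < 1 / ε).trans_le hM
  obtain ⟨k, hk, hzk⟩ := exists_mem_gridBoundary_dist_le (Nat.cast_pos.1 hMpos) hz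
  have hzε : dist z (gridPoint M k) ≤ ε := hzk.trans ((one_div_le hε hMpos).1 hM)
  refine Set.mem_biUnion hk (Metric.mem_closedBall.2 ?_)
  calc dist x (Ψ (gridPoint M k)) ≤ dist x (Ψ z) + dist (Ψ z) (Ψ (gridPoint M k)) :=
        dist_triangle _ _ _
    _ ≤ 2 * ε + L * ε := by
        gcongr
        exact (hΨ.dist_le_mul z hz.1 _ (gridPoint_mem_Icc M k)).trans (by gcongr)
    _ = (L + 2) * ε := by ring

theorem exists_volume_cthickening_image_unitCubeBoundary_le [Nonempty ι]
    {Ψ : (ι → ℝ) → ι → ℝ} {L : NNReal} (hΨ : LipschitzOnWith L Ψ (Set.Icc 0 1)) :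
    ∃ C : ℝ, ∀ ε : ℝ, 0 < ε → ε ≤ 1 →
      volume (Metric.cthickening ε (Ψ '' unitCubeBoundary ι)) ≤ ENNReal.ofReal (C * ε) := by
  set d := Fintype.card ι
  refine ⟨d * (2 * 3 ^ (d - 1)) * (2 * (L + 2)) ^ d, fun ε hε hε1 => ?_⟩
  set M := ⌈1 / ε⌉₊
  have hM : (M : ℝ) + 1 ≤ 3 / ε := by
    have hceil : (M : ℝ) < 1 / ε + 1 := Nat.ceil_lt_add_one (by positivity)
    have hone : 1 ≤ 1 / ε := (one_le_div hε).2 hε1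
    rw [show 3 / ε = 3 * (1 / ε) by ring]
    linarith
  have hcard : ((gridBoundary ι M).card : ℝ) ≤ d * (2 * (3 / ε) ^ (d - 1)) :=
    calc ((gridBoundary ι M).card : ℝ) ≤ d * (2 * ((M : ℝ) + 1) ^ (d - 1)) :=
          mod_cast card_gridBoundary_le M
      _ ≤ _ := by gcongr
  have hpow : ε ^ d = ε ^ (d - 1) * ε := by
    rw [← pow_succ, Nat.sub_add_cancel Fintype.card_pos]
  calc volume (Metric.cthickening ε (Ψ '' unitCubeBoundary ι))
      ≤ ∑ k ∈ gridBoundary ι M,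
          volume (Metric.closedBall (Ψ (gridPoint M k)) ((L + 2) * ε)) :=
        (measure_mono (cthickening_image_unitCubeBoundary_subset hΨ hε (Nat.le_ceil _))).trans
          (measure_biUnion_finset_le _ _)
    _ = ENNReal.ofReal ((gridBoundary ι M).card * (2 * ((L + 2) * ε)) ^ d) := by
        simp only [Real.volume_pi_closedBall _ (show 0 ≤ (L + 2) * ε by positivity),
          Finset.sum_const, nsmul_eq_mul]
        rw [ENNReal.ofReal_mul (Nat.cast_nonneg _), ENNReal.ofReal_natCast]
    _ ≤ ENNReal.ofReal (d * (2 * (3 / ε) ^ (d - 1)) * (2 * ((L + 2) * ε)) ^ d) := by gcongr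
    _ = ENNReal.ofReal (d * (2 * 3 ^ (d - 1)) * (2 * (L + 2)) ^ d * ε) := by
        rw [div_pow, ← mul_assoc 2 _ ε, mul_pow _ ε, hpow]
        field_simp

end LipschitzImage

section FundamentalCone

open MeasureTheory mixedEmbedding fundamentalCone InfinitePlace Units dirichletUnitTheorem

variable (K : Type*) [Field K] [NumberField K]

open Classical in
lemma lipschitzWith_normAtAllPlaces :
    LipschitzWith 1 (normAtAllPlaces : mixedSpace K → realSpace K) := by
  refine LipschitzWith.mk_one fun x y => (dist_pi_le_iff dist_nonneg).2 fun w => ?_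
  rw [normAtAllPlaces_apply, normAtAllPlaces_apply, Real.dist_eq, dist_eq_norm]
  obtain hw | hw := isReal_or_isComplex w
  · rw [normAtPlace_apply_of_isReal hw, normAtPlace_apply_of_isReal hw]
    exact (abs_norm_sub_norm_le _ _).trans
      ((norm_le_pi_norm (x - y).1 ⟨w, hw⟩).trans (norm_fst_le (x - y)))
  · rw [normAtPlace_apply_of_isComplex hw, normAtPlace_apply_of_isComplex hw]
    exact (abs_norm_sub_norm_le _ _).trans
      ((norm_le_pi_norm (x - y).2 ⟨w, hw⟩).trans (norm_snd_le (x - y)))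

lemma cthickening_subset_preimage_of_lipschitzWith_one {X Y : Type*} [PseudoEMetricSpace X]
    [PseudoEMetricSpace Y] {f : X → Y} (hf : LipschitzWith 1 f) {s : Set X} {t : Set Y}
    (hst : s ⊆ f ⁻¹' t) (ε : ℝ) : Metric.cthickening ε s ⊆ f ⁻¹' Metric.cthickening ε t := by
  intro x hx
  rw [Set.mem_preimage, Metric.mem_cthickening_iff]
  refine le_trans (Metric.le_infEDist.2 fun y hy => ?_) (Metric.mem_cthickening_iff.1 hx)
  calc _ ≤ edist (f x) (f y) := Metric.infEDist_le_edist_of_mem (hst hy)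
    _ ≤ edist x y := by simpa using hf x y

open Classical in
/-- A parametrization by the unit cube of the absolute values of the points of `normLeOne K`: the
coordinate at `w₀` is the scaling factor, the other ones are the coordinates with respect to the
fundamental units in logarithmic space. -/
def normLeOneParam (z : realSpace K) : realSpace K :=
  z w₀ • expMapBasis (fun i => if i = w₀ then 0 else z i)

lemma contDiff_normLeOneParam : ContDiff ℝ 1 (normLeOneParam K) := by
  classical
  have hexp : ContDiff ℝ 1 fun x : realSpace K => (expMapBasis x : realSpace K) := by
    refine contDiff_pi.2 fun w => Real.contDiff_exp.comp (contDiff_const.mul ?_)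
    exact contDiff_pi.1 (completeBasis K).equivFunL.symm.contDiff w
  have hreset : ContDiff ℝ 1 fun (z : realSpace K) i => if i = w₀ then (0 : ℝ) else z i := by
    refine contDiff_pi.2 fun i => ?_
    split_ifs
    · exact contDiff_const
    · exact contDiff_apply ℝ ℝ i
  exact (contDiff_apply ℝ ℝ (w₀ : InfinitePlace K)).smul (hexp.comp hreset)

variable {K}

lemma exists_normLeOneParam_eq_of_mem_closure {x : mixedSpace K} (hx : x ∈ closure (normLeOne K)) :
    ∃ z ∈ Set.Icc (0 : realSpace K) 1, normLeOneParam K z = normAtAllPlaces x := by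
  classical
  obtain ⟨c, hc, _, ⟨y, hy, rfl⟩, hxy⟩ := closure_normLeOne_subset K hx
  have hy0 : y w₀ = 0 := by simpa using hy w₀ trivial
  have hyI : ∀ w, w ≠ w₀ → y w ∈ Set.Icc (0 : ℝ) 1 := fun w hw => by simpa [hw] using hy w trivial
  refine ⟨Function.update y w₀ c, ⟨fun w => ?_, fun w => ?_⟩, ?_⟩
  · obtain rfl | hw := eq_or_ne w w₀
    · simpa using hc.1
    · simpa [hw] using (hyI w hw).1
  · obtain rfl | hw := eq_or_ne w w₀
    · simpa using hc.2
    · simpa [hw] using (hyI w hw).2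
  · have hreset : (fun w => if w = w₀ then 0 else Function.update y w₀ c w) = y := by
      ext w
      obtain rfl | hw := eq_or_ne w w₀
      · simp [hy0]
      · simp [hw]
    rw [normLeOneParam, hreset, Function.update_self]
    exact hxy

lemma normLeOneParam_mem_image_interior_paramSet {z : realSpace K} (hz : ∀ w, z w ∈ Set.Ioo 0 1) :
    normLeOneParam K z ∈ expMapBasis '' interior (paramSet K) := by
  classical
  rw [interior_paramSet]
  refine ⟨fun w => if w = w₀ then Real.log (z w₀) else z w, fun w _ => ?_, ?_⟩
  · dsimp only
    split_ifs
    · exact Real.log_neg (hz w₀).1 (hz w₀).2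
    · exact hz w
  · rw [expMapBasis_apply'', if_pos rfl, Real.exp_log (hz w₀).1, normLeOneParam]
    congr 2
    ext w
    split_ifs <;> rfl

variable (K)

lemma frontier_normLeOne_subset :
    frontier (normLeOne K) ⊆
      normAtAllPlaces ⁻¹' (normLeOneParam K '' unitCubeBoundary (InfinitePlace K)) := by
  rintro x ⟨hxclosure, hxinterior⟩
  obtain ⟨z, hz, hzx⟩ := exists_normLeOneParam_eq_of_mem_closure hxclosure
  refine ⟨z, ⟨hz, ?_⟩, hzx⟩
  by_contra! hz_ne
  refine hxinterior (subset_interior_normLeOne K ?_)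
  rw [Set.mem_preimage, ← hzx]
  exact normLeOneParam_mem_image_interior_paramSet fun w =>
    ⟨(hz.1 w).lt_of_ne' (hz_ne w).1, (hz.2 w).lt_of_ne (hz_ne w).2⟩

open Classical in
lemma volume_preimage_normAtAllPlaces_le {B : Set (realSpace K)} (hB : MeasurableSet B) {R : ℝ}
    (hR : ∀ x ∈ B, ‖x‖ ≤ R) :
    volume (normAtAllPlaces ⁻¹' B : Set (mixedSpace K)) ≤
      2 ^ nrRealPlaces K * .ofReal (2 * Real.pi) ^ nrComplexPlaces K *
        (ENNReal.ofReal R ^ nrComplexPlaces K * volume B) := by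
  have hpreimage : normAtAllPlaces ⁻¹' (normAtAllPlaces '' (normAtAllPlaces ⁻¹' B)) =
      (normAtAllPlaces ⁻¹' B : Set (mixedSpace K)) :=
    (Set.preimage_mono (Set.image_preimage_subset _ _)).antisymm (Set.subset_preimage_image _ _)
  have hprod : ∀ x ∈ B, ∏ w : {w : InfinitePlace K // IsComplex w}, ENNReal.ofReal (x w.1) ≤
      ENNReal.ofReal R ^ nrComplexPlaces K := fun x hx => by
    refine Finset.prod_le_pow_card _ _ _ fun w _ => ENNReal.ofReal_le_ofReal ?_
    exact (le_abs_self _).trans ((norm_le_pi_norm x w.1).trans (hR x hx))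
  rw [volume_eq_two_pow_mul_two_pi_pow_mul_integral hpreimage
    (hB.preimage (continuous_normAtAllPlaces K).measurable)]
  gcongr
  calc _ ≤ ∫⁻ x in B, ∏ w : {w : InfinitePlace K // IsComplex w}, ENNReal.ofReal (x w.1) :=
        lintegral_mono_set (Set.image_preimage_subset _ _)
    _ ≤ ∫⁻ _ in B, ENNReal.ofReal R ^ nrComplexPlaces K := setLIntegral_mono measurable_const hprod
    _ = _ := setLIntegral_const _ _

open Classical in
theorem hasThinFrontier_normLeOne : HasThinFrontier volume (normLeOne K) := by
  have hdiff := contDiff_normLeOneParam K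
  obtain ⟨L, hL⟩ := LocallyLipschitzOn.exists_lipschitzOnWith_of_compact
    (isCompact_Icc : IsCompact (Set.Icc (0 : realSpace K) 1))
    hdiff.locallyLipschitz.locallyLipschitzOn
  obtain ⟨C, hC⟩ := exists_volume_cthickening_image_unitCubeBoundary_le hL
  set S := normLeOneParam K '' unitCubeBoundary (InfinitePlace K)
  have hS : Bornology.IsBounded S :=
    ((isCompact_Icc (a := (0 : realSpace K)) (b := 1)).image hdiff.continuous).isBounded.subset
      (Set.image_mono fun z hz => hz.1)
  obtain ⟨R, hR⟩ := (hS.cthickening (δ := 1)).exists_norm_le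
  set Q : ENNReal := 2 ^ nrRealPlaces K * .ofReal (2 * Real.pi) ^ nrComplexPlaces K *
    ENNReal.ofReal R ^ nrComplexPlaces K with hQ
  refine ⟨Q.toReal * max C 0, fun ε hε hε1 => ?_⟩
  have hvolume : volume (Metric.cthickening ε (frontier (normLeOne K))) ≤
      Q * ENNReal.ofReal (max C 0 * ε) :=
    calc _ ≤ volume (normAtAllPlaces ⁻¹' Metric.cthickening ε S : Set (mixedSpace K)) :=
          measure_mono (cthickening_subset_preimage_of_lipschitzWith_one
            (lipschitzWith_normAtAllPlaces K) (frontier_normLeOne_subset K) ε)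
      _ ≤ Q * volume (Metric.cthickening ε S) := by
          rw [hQ, mul_assoc]
          exact volume_preimage_normAtAllPlaces_le K Metric.isClosed_cthickening.measurableSet
            fun x hx => hR x (Metric.cthickening_mono hε1 _ hx)
      _ ≤ Q * ENNReal.ofReal (max C 0 * ε) := by
          gcongr
          exact (hC ε hε hε1).trans (by gcongr; exact le_max_left _ _)
  calc _ ≤ (Q * ENNReal.ofReal (max C 0 * ε)).toReal :=
        ENNReal.toReal_mono (by finiteness) hvolume
    _ = Q.toReal * max C 0 * ε := by
        rw [ENNReal.toReal_mul, ENNReal.toReal_ofReal (by positivity), mul_assoc]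

end FundamentalCone

section IdealCount

open MeasureTheory Module Ideal mixedEmbedding fundamentalCone InfinitePlace Units
open scoped nonZeroDivisors

variable {K : Type*} [Field K] [NumberField K]

/-- The nonzero ideals of norm at most `s`. -/
def idealsNormLE (K : Type*) [Field K] [NumberField K] (s : ℝ) : Set (Ideal (𝓞 K))⁰ :=
  {I | (absNorm (I : Ideal (𝓞 K)) : ℝ) ≤ s}

/-- The nonzero ideals of norm at most `s` in the ideal class `c`. -/
def classIdealsNormLE (c : ClassGroup (𝓞 K)) (s : ℝ) : Set (Ideal (𝓞 K))⁰ :=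
  {I ∈ idealsNormLE K s | ClassGroup.mk0 I = c}

lemma card_classIdealsNormLE_eq_card_isPrincipal {c : ClassGroup (𝓞 K)} {J : (Ideal (𝓞 K))⁰}
    (hJ : ClassGroup.mk0 J = c⁻¹) (s : ℝ) :
    Nat.card (classIdealsNormLE c s) =
      Nat.card {I : (Ideal (𝓞 K))⁰ // (J : Ideal (𝓞 K)) ∣ I ∧
        Submodule.IsPrincipal (I : Ideal (𝓞 K)) ∧
        absNorm (I : Ideal (𝓞 K)) ≤ s * absNorm (J : Ideal (𝓞 K))} := by
  have hJpos : (0 : ℝ) < absNorm (J : Ideal (𝓞 K)) :=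
    Nat.cast_pos.2 (absNorm_pos_of_nonZeroDivisors J)
  have hprincipal (I : (Ideal (𝓞 K))⁰) :
      Submodule.IsPrincipal ((J * I : (Ideal (𝓞 K))⁰) : Ideal (𝓞 K)) ↔ ClassGroup.mk0 I = c := by
    rw [← ClassGroup.mk0_eq_one_iff (J * I).2, Subtype.coe_eta, map_mul, hJ,
      _root_.inv_mul_eq_one, eq_comm]
  have hnorm (I : (Ideal (𝓞 K))⁰) :
      (absNorm ((J * I : (Ideal (𝓞 K))⁰) : Ideal (𝓞 K)) : ℝ) ≤ s * absNorm (J : Ideal (𝓞 K)) ↔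
        I ∈ idealsNormLE K s := by
    rw [Submonoid.coe_mul, map_mul, Nat.cast_mul, mul_comm, mul_le_mul_iff_left₀ hJpos]
    rfl
  refine Nat.card_congr (Set.BijOn.equiv (fun I => J * I) ⟨?_, ?_, ?_⟩)
  · exact fun I ⟨hs, hc⟩ => ⟨dvd_mul_right _ _, (hprincipal I).2 hc, (hnorm I).2 hs⟩
  · exact (mul_right_injective J).injOn
  · rintro I ⟨hdvd, hI, hs⟩
    obtain ⟨I', rfl⟩ := nonZeroDivisors_dvd_iff_dvd_coe.2 hdvd
    exact ⟨I', ⟨(hnorm I').1 hs, (hprincipal I').1 hI⟩, rfl⟩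

lemma inv_smul_mem_normLeOne_iff {t : ℝ} (ht : 0 < t) (a : mixedSpace K) :
    t⁻¹ • a ∈ normLeOne K ↔
      a ∈ fundamentalCone K ∧ mixedEmbedding.norm a ≤ t ^ finrank ℚ K := by
  change t⁻¹ • a ∈ fundamentalCone K ∧ mixedEmbedding.norm (t⁻¹ • a) ≤ 1 ↔ _
  rw [smul_mem_iff_mem (inv_ne_zero ht.ne'), mixedEmbedding.norm_smul, abs_inv, abs_of_pos ht,
    inv_pow, inv_mul_le_iff₀ (by positivity), mul_one]

lemma mem_idealSet_iff_mem_idealLattice {J : (Ideal (𝓞 K))⁰} {a : mixedSpace K} :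
    a ∈ idealSet K J ↔
      a ∈ fundamentalCone K ∧ a ∈ mixedEmbedding.idealLattice K (FractionalIdeal.mk0 K J) := by
  rw [mem_idealSet, mem_idealLattice]
  refine and_congr_right fun _ => ⟨?_, ?_⟩
  · rintro ⟨x, hx, rfl⟩
    exact ⟨(x : K), by simpa using hx, rfl⟩
  · rintro ⟨x, hx, rfl⟩
    obtain ⟨x', hx', rfl⟩ := (FractionalIdeal.coe_mk0 (K := K) J ▸ hx :)
    exact ⟨x', hx', rfl⟩

open Classical in
lemma card_classIdealsNormLE_mul_torsionOrder {c : ClassGroup (𝓞 K)} {J : (Ideal (𝓞 K))⁰}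
    (hJ : ClassGroup.mk0 J = c⁻¹) {ι : Type*} (b : Basis ι ℝ (mixedSpace K))
    (hb : Submodule.span ℤ (Set.range b) =
      mixedEmbedding.idealLattice K (FractionalIdeal.mk0 K J)) {s t : ℝ} (ht : 0 < t)
    (hst : s * absNorm (J : Ideal (𝓞 K)) = t ^ finrank ℚ K) :
    Nat.card (classIdealsNormLE c s) * torsionOrder K =
      Nat.card (latticePoints b (normLeOne K) t) := by
  rw [card_classIdealsNormLE_eq_card_isPrincipal hJ, card_isPrincipal_dvd_norm_le]
  refine Nat.card_congr ((Equiv.subtypeSubtypeEquivSubtypeInter (fun a => a ∈ idealSet K J)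
    (fun a => mixedEmbedding.norm a ≤ s * absNorm (J : Ideal (𝓞 K)))).trans
    (Equiv.subtypeEquivProp ?_))
  ext a
  change _ ↔ a ∈ Submodule.span ℤ (Set.range b) ∧ t⁻¹ • a ∈ normLeOne K
  rw [inv_smul_mem_normLeOne_iff ht, hb, hst, mem_idealSet_iff_mem_idealLattice]
  tauto

theorem exists_card_classIdealsNormLE_sub_isBigO (c : ClassGroup (𝓞 K)) :
    ∃ κ : ℝ, (fun s : ℝ => (Nat.card (classIdealsNormLE c s) : ℝ) - κ * s)
      =O[atTop] fun s => s ^ (1 - 1 / (finrank ℚ K : ℝ)) := by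
  classical
  obtain ⟨J, hJ⟩ := ClassGroup.mk0_surjective c⁻¹
  set L := mixedEmbedding.idealLattice K (FractionalIdeal.mk0 K J)
  let b := (Module.Free.chooseBasis ℤ L).ofZLatticeBasis ℝ L
  have hb : Submodule.span ℤ (Set.range b) = L := Basis.ofZLatticeBasis_span ℝ L _
  have hlattice := card_latticePoints_sub_isBigO volume b (isBounded_normLeOne K)
    (measurableSet_normLeOne K) (hasThinFrontier_normLeOne K)
  rw [mixedEmbedding.finrank K] at hlattice
  set v := volume.real (normLeOne K) / volume.real (ZSpan.fundamentalDomain b)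
  have hn : (finrank ℚ K : ℝ) ≠ 0 := Nat.cast_ne_zero.2 finrank_pos.ne'
  have hJpos : (0 : ℝ) < absNorm (J : Ideal (𝓞 K)) :=
    Nat.cast_pos.2 (absNorm_pos_of_nonZeroDivisors J)
  have htorsion : (torsionOrder K : ℝ) ≠ 0 := Nat.cast_ne_zero.2 (torsionOrder_ne_zero K)
  let t : ℝ → ℝ := fun s => (s * absNorm (J : Ideal (𝓞 K))) ^ (1 / (finrank ℚ K : ℝ))
  have ht : Tendsto t atTop atTop := (tendsto_rpow_atTop (by positivity)).comp
    (tendsto_id.atTop_mul_const hJpos)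
  have htpow {s : ℝ} (hs : 0 < s) : s * absNorm (J : Ideal (𝓞 K)) = t s ^ finrank ℚ K := by
    rw [← Real.rpow_natCast, ← Real.rpow_mul (by positivity), one_div_mul_cancel hn, Real.rpow_one]
  refine ⟨v * absNorm (J : Ideal (𝓞 K)) / torsionOrder K, ?_⟩
  refine (((hlattice.comp_tendsto ht).const_mul_left (torsionOrder K : ℝ)⁻¹).trans
    (IsBigO.of_bound (absNorm (J : Ideal (𝓞 K)) ^ (1 - 1 / (finrank ℚ K : ℝ)) : ℝ) ?_)).congr'
    ?_ EventuallyEq.rfl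
  · filter_upwards [eventually_gt_atTop 0] with s hs
    have hsJ : 0 < s * absNorm (J : Ideal (𝓞 K)) := by positivity
    rw [Function.comp_apply, ← htpow hs, Real.norm_of_nonneg (by positivity),
      Real.norm_of_nonneg (by positivity), mul_comm ((absNorm (J : Ideal (𝓞 K)) : ℝ) ^ _),
      ← Real.mul_rpow hs.le hJpos.le, Real.rpow_sub hsJ, Real.rpow_one]
  · filter_upwards [eventually_gt_atTop 0] with s hs
    have htpos : 0 < t s := Real.rpow_pos_of_pos (by positivity) _
    rw [Function.comp_apply, ← card_classIdealsNormLE_mul_torsionOrder hJ b hb htpos (htpow hs),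
      ← htpow hs]
    push_cast
    field_simp

variable (K)

lemma finite_idealsNormLE (s : ℝ) : (idealsNormLE K s).Finite :=
  (finite_setOfPred_absNorm_le₀ (S := 𝓞 K) ⌊s⌋₊).subset fun _ hI => Nat.le_floor hI

lemma card_idealsNormLE_eq_sum (s : ℝ) :
    Nat.card (idealsNormLE K s) = ∑ c : ClassGroup (𝓞 K), Nat.card (classIdealsNormLE c s) := by
  classical
  have hfin := finite_idealsNormLE K s
  rw [Nat.card_eq_card_finite_toFinset hfin,
    Finset.card_eq_sum_card_fiberwise (f := ClassGroup.mk0) fun I _ => Finset.mem_univ _]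
  refine Finset.sum_congr rfl fun c _ => ?_
  rw [← Nat.card_eq_finsetCard]
  exact Nat.card_congr (Equiv.setCongr (by ext I; simp [classIdealsNormLE]))

lemma kappaK_pos : 0 < kappaK K := by
  have hregulator := regulator_pos K
  have hclass : 0 < (classNumber K : ℝ) := Nat.cast_pos.2 Fintype.card_pos
  have htorsion : 0 < (torsionOrder K : ℝ) :=
    Nat.cast_pos.2 (Nat.pos_of_ne_zero (torsionOrder_ne_zero K))
  have hdiscr : 0 < |(discr K : ℝ)| := abs_pos.2 (Int.cast_ne_zero.2 (discr_ne_zero K))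
  unfold kappaK
  positivity

theorem card_idealsNormLE_sub_isBigO :
    (fun s : ℝ => (Nat.card (idealsNormLE K s) : ℝ) - kappaK K * s)
      =O[atTop] fun s => s ^ (1 - 1 / (finrank ℚ K : ℝ)) := by
  choose κ hκ using exists_card_classIdealsNormLE_sub_isBigO (K := K)
  have hsum : (fun s : ℝ => (Nat.card (idealsNormLE K s) : ℝ) - (∑ c, κ c) * s)
      =O[atTop] fun s => s ^ (1 - 1 / (finrank ℚ K : ℝ)) := by
    refine (IsBigO.fun_sum (s := Finset.univ) fun c _ => hκ c).congr_left fun s => ?_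
    rw [card_idealsNormLE_eq_sum, Nat.cast_sum, Finset.sum_mul, Finset.sum_sub_distrib]
  have hn : (0 : ℝ) < finrank ℚ K := Nat.cast_pos.2 finrank_pos
  have hlittle : (fun s : ℝ => s ^ (1 - 1 / (finrank ℚ K : ℝ))) =o[atTop] fun s : ℝ => s := by
    refine (isLittleO_iff_tendsto' ?_).2 ((tendsto_rpow_neg_atTop (one_div_pos.2 hn)).congr' ?_)
    · filter_upwards [eventually_ne_atTop 0] with s hs hs0 using (hs hs0).elim
    · filter_upwards [eventually_gt_atTop 0] with s hs
      rw [sub_eq_add_neg, Real.rpow_add hs, Real.rpow_one, mul_div_cancel_left₀ _ hs.ne']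
  have hlim : Tendsto (fun s : ℝ => (Nat.card (idealsNormLE K s) : ℝ) / s) atTop
      (𝓝 (∑ c, κ c)) := by
    have hzero := ((hsum.trans_isLittleO hlittle).tendsto_div_nhds_zero).add_const (∑ c, κ c)
    rw [zero_add] at hzero
    refine hzero.congr' ?_
    filter_upwards [eventually_ne_atTop 0] with s hs
    field_simp
    ring
  have hκK : ∑ c, κ c = kappaK K := by
    refine (tendsto_nhds_unique hlim (Ideal.tendsto_norm_le_div_atTop₀ K)).trans ?_
    rw [kappaK]
    ring
  rwa [hκK] at hsum

end IdealCount

section AbelSummation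

open MeasureTheory Set

variable {ι : Type*} {s : Finset ι} {a n : ι → ℝ} {x y : ℝ}

lemma sum_filter_mul_eq_sum_indicator (g : ℝ → ℝ) (t : ℝ) :
    (∑ i ∈ s with n i ≤ t, a i) * g t = ∑ i ∈ s, a i * (Ici (n i)).indicator g t := by
  rw [Finset.sum_mul, Finset.sum_filter]
  exact Finset.sum_congr rfl fun i _ => by by_cases h : n i ≤ t <;> simp [h]

lemma intervalIntegrable_indicator_Ici {g : ℝ → ℝ} (hg : IntervalIntegrable g volume x y)
    (c : ℝ) : IntervalIntegrable ((Ici c).indicator g) volume x y := by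
  rw [intervalIntegrable_iff] at hg ⊢
  exact hg.indicator measurableSet_Ici

lemma intervalIntegrable_sum_filter_mul {g : ℝ → ℝ} (hg : IntervalIntegrable g volume x y) :
    IntervalIntegrable (fun t => (∑ i ∈ s with n i ≤ t, a i) * g t) volume x y := by
  simp_rw [sum_filter_mul_eq_sum_indicator]
  simpa only [Finset.sum_fn] using IntervalIntegrable.sum s
    fun i _ => (intervalIntegrable_indicator_Ici hg (n i)).const_mul (a i)

lemma intervalIntegral_indicator_Ici {c : ℝ} (hc : c ∈ Icc x y) (g : ℝ → ℝ) :
    ∫ t in x..y, (Ici c).indicator g t = ∫ t in c..y, g t := by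
  have hinter : Icc x y ∩ Ici c = Icc c y :=
    Set.ext fun _ => ⟨fun h => ⟨h.2, h.1.2⟩, fun h => ⟨⟨hc.1.trans h.1, h.2⟩, h.1⟩⟩
  rw [intervalIntegral.integral_of_le (hc.1.trans hc.2), intervalIntegral.integral_of_le hc.2,
    ← integral_Icc_eq_integral_Ioc, ← integral_Icc_eq_integral_Ioc,
    setIntegral_indicator measurableSet_Ici, hinter]

theorem sum_mul_eq_mul_sub_integral {f f' : ℝ → ℝ} (hn : ∀ i ∈ s, n i ∈ Icc x y)
    (hf : ∀ t ∈ Icc x y, HasDerivAt f (f' t) t) (hf' : ContinuousOn f' (Icc x y)) :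
    ∑ i ∈ s, a i * f (n i) =
      (∑ i ∈ s, a i) * f y - ∫ t in x..y, (∑ i ∈ s with n i ≤ t, a i) * f' t := by
  have hint (i : ι) (hi : i ∈ s) : IntervalIntegrable f' volume x y :=
    hf'.intervalIntegrable_of_Icc ((hn i hi).1.trans (hn i hi).2)
  have hftc (i : ι) (hi : i ∈ s) : ∫ t in n i..y, f' t = f y - f (n i) := by
    have hsub : uIcc (n i) y ⊆ Icc x y := by
      rw [uIcc_of_le (hn i hi).2]
      exact Icc_subset_Icc_left (hn i hi).1
    exact intervalIntegral.integral_eq_sub_of_hasDerivAt (fun t ht => hf t (hsub ht))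
      (hf'.mono hsub).intervalIntegrable
  simp_rw [sum_filter_mul_eq_sum_indicator]
  rw [intervalIntegral.integral_finsetSum fun i hi =>
      (intervalIntegrable_indicator_Ici (hint i hi) (n i)).const_mul (a i),
    Finset.sum_mul, ← Finset.sum_sub_distrib]
  refine Finset.sum_congr rfl fun i hi => ?_
  rw [intervalIntegral.integral_const_mul, intervalIntegral_indicator_Ici (hn i hi), hftc i hi]
  ring

lemma sum_mul_rpow_neg_le {σ C : ℝ} (hσ : 0 ≤ σ) (hσ1 : σ ≠ 1) (hx : 1 ≤ x)
    (hn : ∀ i ∈ s, n i ∈ Icc 1 x) (hC : ∀ t ∈ Icc 1 x, ∑ i ∈ s with n i ≤ t, a i ≤ C * t) :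
    ∑ i ∈ s, a i * n i ^ (-σ) ≤
      C * x ^ (1 - σ) + σ * C * ((x ^ (1 - σ) - 1) / (1 - σ)) := by
  have hpos {t : ℝ} (ht : t ∈ Icc 1 x) : 0 < t := one_pos.trans_le ht.1
  have hx0 := hpos (right_mem_Icc.2 hx)
  have hderiv (t : ℝ) (ht : t ∈ Icc 1 x) :
      HasDerivAt (fun t : ℝ => t ^ (-σ)) (-σ * t ^ (-σ - 1)) t :=
    Real.hasDerivAt_rpow_const (Or.inl (hpos ht).ne')
  have hcont (r : ℝ) : ContinuousOn (fun t : ℝ => t ^ r) (Icc 1 x) := fun t ht =>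
    (Real.continuousAt_rpow_const t r (Or.inl (hpos ht).ne')).continuousWithinAt
  have htotal : ∑ i ∈ s, a i ≤ C * x := by
    simpa only [Finset.filter_true_of_mem fun i hi => (hn i hi).2] using hC x (right_mem_Icc.2 hx)
  have hintegral : ∫ t in (1 : ℝ)..x, (∑ i ∈ s with n i ≤ t, a i) * (-σ * t ^ (-σ - 1)) ≥
      ∫ t in (1 : ℝ)..x, -(σ * C) * t ^ (-σ) := by
    refine intervalIntegral.integral_mono_on hx
      (((hcont _).const_mul _).intervalIntegrable_of_Icc hx)
      (intervalIntegrable_sum_filter_mul (((hcont _).const_mul _).intervalIntegrable_of_Icc hx))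
      fun t ht => ?_
    have hmul := mul_le_mul_of_nonneg_right (hC t ht)
      (mul_nonneg hσ (Real.rpow_nonneg (hpos ht).le (-σ - 1)))
    have hsplit : t ^ (-σ) = t * t ^ (-σ - 1) := by
      rw [Real.rpow_sub_one (hpos ht).ne', mul_div_cancel₀ _ (hpos ht).ne']
    rw [hsplit]
    linarith
  rw [intervalIntegral.integral_const_mul, integral_rpow (Or.inr ⟨by contrapose! hσ1; linarith,
    by rw [uIcc_of_le hx]; exact fun h => one_pos.not_ge h.1⟩), Real.one_rpow,
    neg_add_eq_sub] at hintegral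
  have hboundary := mul_le_mul_of_nonneg_right htotal (Real.rpow_nonneg hx0.le (-σ))
  rw [mul_assoc, ← Real.rpow_one_add' hx0.le (by contrapose! hσ1; linarith),
    ← sub_eq_add_neg] at hboundary
  rw [sum_mul_eq_mul_sub_integral hn hderiv ((hcont _).const_mul _)]
  linarith

lemma sum_mul_rpow_neg_le_of_lt_one {σ C : ℝ} (hσ : 0 ≤ σ) (hσ1 : σ < 1) (hx : 1 ≤ x)
    (hn : ∀ i ∈ s, n i ∈ Icc 1 x) (hC : ∀ t ∈ Icc 1 x, ∑ i ∈ s with n i ≤ t, a i ≤ C * t)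
    (hC0 : 0 ≤ C) :
    ∑ i ∈ s, a i * n i ^ (-σ) ≤ C / (1 - σ) * x ^ (1 - σ) := by
  have hσ' : 0 < 1 - σ := sub_pos.2 hσ1
  calc ∑ i ∈ s, a i * n i ^ (-σ)
      ≤ C * x ^ (1 - σ) + σ * C * ((x ^ (1 - σ) - 1) / (1 - σ)) :=
        sum_mul_rpow_neg_le hσ hσ1.ne hx hn hC
    _ = C / (1 - σ) * x ^ (1 - σ) - σ * C / (1 - σ) := by field_simp; ring
    _ ≤ C / (1 - σ) * x ^ (1 - σ) := sub_le_self _ (by positivity)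

lemma summable_mul_rpow_neg_of_one_lt {σ C : ℝ} (hσ : 1 < σ) (ha : ∀ i, 0 ≤ a i)
    (hn : ∀ i, 1 ≤ n i)
    (hC : ∀ t, 1 ≤ t → ∀ s : Finset ι, (∀ i ∈ s, n i ≤ t) → ∑ i ∈ s, a i ≤ C * t) :
    Summable fun i => a i * n i ^ (-σ) := by
  have hσ' : 0 < σ - 1 := sub_pos.2 hσ
  have hC0 : 0 ≤ C := by simpa using hC 1 le_rfl ∅
  refine summable_of_sum_le (c := σ * C / (σ - 1))
    (fun i => mul_nonneg (ha i) (Real.rpow_nonneg (zero_le_one.trans (hn i)) _)) fun s => ?_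
  obtain ⟨x, hx, hnx⟩ : ∃ x, 1 ≤ x ∧ ∀ i ∈ s, n i ≤ x := by
    obtain ⟨x, hx⟩ := (s.finite_toSet.image n).bddAbove
    exact ⟨max x 1, le_max_right _ _,
      fun i hi => (hx (mem_image_of_mem n hi)).trans (le_max_left _ _)⟩
  calc ∑ i ∈ s, a i * n i ^ (-σ)
      ≤ C * x ^ (1 - σ) + σ * C * ((x ^ (1 - σ) - 1) / (1 - σ)) :=
        sum_mul_rpow_neg_le (by linarith) hσ.ne' hx (fun i hi => ⟨hn i, hnx i hi⟩)
          fun t ht => hC t ht.1 _ fun i hi => (Finset.mem_filter.1 hi).2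
    _ = σ * C / (σ - 1) - C / (σ - 1) * x ^ (1 - σ) := by
        rw [← neg_sub σ 1]
        field_simp
        ring
    _ ≤ σ * C / (σ - 1) := sub_le_self _ (by positivity)

lemma hasDerivAt_inv_log {t : ℝ} (ht : 1 < t) :
    HasDerivAt (fun t => (Real.log t)⁻¹) (-(t * Real.log t ^ 2)⁻¹) t := by
  have hlog := (Real.log_pos ht).ne'
  refine ((Real.hasDerivAt_log (one_pos.trans ht).ne').inv hlog).congr_deriv ?_
  field_simp

lemma continuousOn_inv_mul_log_sq (hx : 1 < x) :
    ContinuousOn (fun t => (t * Real.log t ^ 2)⁻¹) (Icc x y) := by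
  have hpos {t : ℝ} (ht : t ∈ Icc x y) : 1 < t := hx.trans_le ht.1
  refine (continuousOn_id.mul ((continuousOn_id.log fun t ht => ?_).pow 2)).inv₀ fun t ht => ?_
  · exact (one_pos.trans (hpos ht)).ne'
  · exact mul_ne_zero (one_pos.trans (hpos ht)).ne' (pow_ne_zero _ (Real.log_pos (hpos ht)).ne')

lemma integral_inv_mul_log_sq (hx : 1 < x) (hxy : x ≤ y) :
    ∫ t in x..y, (t * Real.log t ^ 2)⁻¹ = (Real.log x)⁻¹ - (Real.log y)⁻¹ := by
  rw [← neg_inj, ← intervalIntegral.integral_neg, neg_sub]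
  refine intervalIntegral.integral_eq_sub_of_hasDerivAt (fun t ht => hasDerivAt_inv_log ?_)
    ((continuousOn_inv_mul_log_sq hx).neg.intervalIntegrable_of_Icc hxy)
  rw [uIcc_of_le hxy] at ht
  exact hx.trans_le ht.1

lemma continuousOn_log_sub_log_mul_inv_mul_log_sq (hx : 1 < x) :
    ContinuousOn (fun t => (Real.log t - Real.log x) * (t * Real.log t ^ 2)⁻¹) (Icc x y) :=
  ((continuousOn_id.log fun _ ht => (one_pos.trans (hx.trans_le ht.1)).ne').sub
    continuousOn_const).mul (continuousOn_inv_mul_log_sq hx)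

lemma integral_log_sub_log_mul_inv_mul_log_sq (hx : 1 < x) (hxy : x ≤ y) :
    ∫ t in x..y, (Real.log t - Real.log x) * (t * Real.log t ^ 2)⁻¹ =
      Real.log (Real.log y) - Real.log (Real.log x) -
        (Real.log y - Real.log x) * (Real.log y)⁻¹ := by
  have hlogx := Real.log_pos hx
  have hlogy := Real.log_pos (hx.trans_le hxy)
  have hderiv (t : ℝ) (ht : t ∈ uIcc x y) :
      HasDerivAt (fun t => Real.log (Real.log t) + Real.log x * (Real.log t)⁻¹)
        ((Real.log t - Real.log x) * (t * Real.log t ^ 2)⁻¹) t := by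
    rw [uIcc_of_le hxy] at ht
    have ht1 : 1 < t := hx.trans_le ht.1
    have hlog := (Real.log_pos ht1).ne'
    refine (((Real.hasDerivAt_log (one_pos.trans ht1).ne').log hlog).add
      ((hasDerivAt_inv_log ht1).const_mul (Real.log x))).congr_deriv ?_
    field_simp
    ring
  rw [intervalIntegral.integral_eq_sub_of_hasDerivAt hderiv
    ((continuousOn_log_sub_log_mul_inv_mul_log_sq hx).intervalIntegrable_of_Icc hxy)]
  field_simp
  ring

theorem abs_sum_div_log_sub_log_log_le {C : ℝ} (hx : 1 < x) (hxy : x ≤ y)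
    (hn : ∀ i ∈ s, n i ∈ Icc x y)
    (hC : ∀ t ∈ Icc x y, |∑ i ∈ s with n i ≤ t, a i - (Real.log t - Real.log x)| ≤ C) :
    |∑ i ∈ s, a i * (Real.log (n i))⁻¹ - (Real.log (Real.log y) - Real.log (Real.log x))| ≤
      C / Real.log x := by
  have hlogy := Real.log_pos (hx.trans_le hxy)
  have hψ := (continuousOn_inv_mul_log_sq (y := y) hx).intervalIntegrable_of_Icc hxy (μ := volume)
  set ψ : ℝ → ℝ := fun t => (t * Real.log t ^ 2)⁻¹
  have hlogψ : IntervalIntegrable (fun t => (Real.log t - Real.log x) * ψ t) volume x y :=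
    (continuousOn_log_sub_log_mul_inv_mul_log_sq hx).intervalIntegrable_of_Icc hxy
  have hboundary : |(∑ i ∈ s, a i - (Real.log y - Real.log x)) * (Real.log y)⁻¹| ≤
      C * (Real.log y)⁻¹ := by
    rw [abs_mul, abs_of_pos (inv_pos.2 hlogy)]
    refine mul_le_mul_of_nonneg_right ?_ (inv_pos.2 hlogy).le
    simpa only [Finset.filter_true_of_mem fun i hi => (hn i hi).2] using hC y (right_mem_Icc.2 hxy)
  have hintegral : |∫ t in x..y,
      ((∑ i ∈ s with n i ≤ t, a i) * ψ t - (Real.log t - Real.log x) * ψ t)| ≤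
      C * ((Real.log x)⁻¹ - (Real.log y)⁻¹) := by
    rw [← Real.norm_eq_abs, ← integral_inv_mul_log_sq hx hxy, ← intervalIntegral.integral_const_mul]
    refine intervalIntegral.norm_integral_le_of_norm_le hxy (.of_forall fun t ht => ?_)
      (hψ.const_mul C)
    have htpos : 0 < t := (one_pos.trans hx).trans ht.1
    rw [← sub_mul, Real.norm_eq_abs, abs_mul, abs_of_nonneg (a := ψ t) (by positivity)]
    exact mul_le_mul_of_nonneg_right (hC t ⟨ht.1.le, ht.2⟩) (by positivity)
  rw [intervalIntegral.integral_sub (intervalIntegrable_sum_filter_mul hψ) hlogψ,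
    integral_log_sub_log_mul_inv_mul_log_sq hx hxy] at hintegral
  have habel := sum_mul_eq_mul_sub_integral (a := a) hn
    (fun t ht => hasDerivAt_inv_log (hx.trans_le ht.1)) (continuousOn_inv_mul_log_sq hx).neg
  simp_rw [mul_neg, intervalIntegral.integral_neg, sub_neg_eq_add] at habel
  rw [habel]
  rw [abs_le] at hboundary hintegral ⊢
  rw [div_eq_mul_inv]
  constructor <;> linarith [hboundary.1, hboundary.2, hintegral.1, hintegral.2]

end AbelSummation

/-- A free commutative monoid `P →₀ ℕ` on a set `P` of primes, written additively, with a real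
norm for which only finitely many elements have bounded norm. The model is the monoid of nonzero
ideals of a number field. -/
structure ArithmeticSemigroup (P : Type*) where
  primeNorm : P → ℝ
  two_le_primeNorm : ∀ p, 2 ≤ primeNorm p
  finite_setOf_prod_le : ∀ x : ℝ, {f : P →₀ ℕ | (f.prod fun p k => primeNorm p ^ k) ≤ x}.Finite

namespace ArithmeticSemigroup

variable {P : Type*} (S : ArithmeticSemigroup P)

section Basic

/-- The multiplicative extension of `primeNorm` to the whole semigroup. -/
def norm (f : P →₀ ℕ) : ℝ := f.prod fun p k => S.primeNorm p ^ k

lemma primeNorm_pos (p : P) : 0 < S.primeNorm p := two_pos.trans_le (S.two_le_primeNorm p)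

lemma one_lt_primeNorm (p : P) : 1 < S.primeNorm p := one_lt_two.trans_le (S.two_le_primeNorm p)

lemma log_primeNorm_pos (p : P) : 0 < Real.log (S.primeNorm p) :=
  Real.log_pos (S.one_lt_primeNorm p)

lemma one_half_le_log_primeNorm (p : P) : 1 / 2 ≤ Real.log (S.primeNorm p) := by
  linarith [Real.log_two_gt_d9, Real.log_le_log two_pos (S.two_le_primeNorm p)]

lemma norm_zero : S.norm 0 = 1 := Finsupp.prod_zero_index

lemma norm_add (f g : P →₀ ℕ) : S.norm (f + g) = S.norm f * S.norm g := by
  classical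
  exact Finsupp.prod_add_index' (fun _ => pow_zero _) fun _ _ _ => pow_add _ _ _

lemma norm_single (p : P) (k : ℕ) : S.norm (Finsupp.single p k) = S.primeNorm p ^ k :=
  Finsupp.prod_single_index (pow_zero _)

lemma norm_nsmul (k : ℕ) (f : P →₀ ℕ) : S.norm (k • f) = S.norm f ^ k := by
  induction k with
  | zero => rw [zero_smul, norm_zero, pow_zero]
  | succ k ih => rw [add_smul, one_smul, norm_add, ih, pow_succ]

lemma one_le_norm (f : P →₀ ℕ) : 1 ≤ S.norm f :=
  Finset.one_le_prod fun p _ => one_le_pow₀ (S.one_lt_primeNorm p).le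

lemma norm_pos (f : P →₀ ℕ) : 0 < S.norm f := one_pos.trans_le (S.one_le_norm f)

lemma log_norm_nonneg (f : P →₀ ℕ) : 0 ≤ Real.log (S.norm f) := Real.log_nonneg (S.one_le_norm f)

lemma log_norm (f : P →₀ ℕ) :
    Real.log (S.norm f) = ∑ p ∈ f.support, (f p : ℝ) * Real.log (S.primeNorm p) := by
  rw [norm, Finsupp.prod, Real.log_prod fun p _ => pow_ne_zero _ (S.primeNorm_pos p).ne']
  simp_rw [Real.log_pow]

lemma card_support_le_two_mul_log_norm (f : P →₀ ℕ) :
    (f.support.card : ℝ) ≤ 2 * Real.log (S.norm f) := by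
  rw [log_norm, Finset.mul_sum, Finset.cast_card]
  refine Finset.sum_le_sum fun p hp => ?_
  have hfp : (1 : ℝ) ≤ f p :=
    Nat.one_le_cast.2 (Nat.one_le_iff_ne_zero.2 (Finsupp.mem_support_iff.1 hp))
  linarith [mul_le_mul hfp (S.one_half_le_log_primeNorm p) one_half_pos.le (Nat.cast_nonneg _)]

lemma exists_eq_add_single {f : P →₀ ℕ} {p : P} {k : ℕ} (h : k ≤ f p) :
    ∃ g, f = g + Finsupp.single p k :=
  ⟨f - Finsupp.single p k, (tsub_add_cancel_of_le (Finsupp.single_le_iff.2 h)).symm⟩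

lemma primeNorm_le_norm {f : P →₀ ℕ} {p : P} (hp : p ∈ f.support) :
    S.primeNorm p ≤ S.norm f := by
  obtain ⟨g, rfl⟩ := exists_eq_add_single
    (Nat.one_le_iff_ne_zero.2 (Finsupp.mem_support_iff.1 hp))
  rw [norm_add, norm_single, pow_one]
  exact le_mul_of_one_le_left (S.primeNorm_pos p).le (S.one_le_norm g)

/-- The elements of norm at most `x`. -/
def elementsLE (x : ℝ) : Finset (P →₀ ℕ) := (S.finite_setOf_prod_le x).toFinset

lemma mem_elementsLE {x : ℝ} {f : P →₀ ℕ} : f ∈ S.elementsLE x ↔ S.norm f ≤ x := by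
  simp [elementsLE, norm]

lemma finite_setOf_primeNorm_le (x : ℝ) : {p | S.primeNorm p ≤ x}.Finite := by
  refine ((S.elementsLE x).finite_toSet.preimage
    (Finsupp.single_left_injective one_ne_zero).injOn).subset fun p hp => ?_
  rwa [Set.mem_preimage, Finset.mem_coe, mem_elementsLE, norm_single, pow_one]

/-- The primes of norm at most `x`. -/
def primesLE (x : ℝ) : Finset P := (S.finite_setOf_primeNorm_le x).toFinset

lemma mem_primesLE {x : ℝ} {p : P} : p ∈ S.primesLE x ↔ S.primeNorm p ≤ x := by simp [primesLE]

lemma primesLE_subset {x y : ℝ} (h : x ≤ y) : S.primesLE x ⊆ S.primesLE y := fun _ hp =>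
  S.mem_primesLE.2 ((S.mem_primesLE.1 hp).trans h)

lemma support_subset_primesLE {x : ℝ} {f : P →₀ ℕ} (hf : f ∈ S.elementsLE x) :
    f.support ⊆ S.primesLE x := fun _ hp =>
  S.mem_primesLE.2 ((S.primeNorm_le_norm hp).trans (S.mem_elementsLE.1 hf))

lemma elementsLE_eq_empty {x : ℝ} (hx : x < 1) : S.elementsLE x = ∅ :=
  Finset.eq_empty_of_forall_notMem fun f hf =>
    (hx.trans_le (S.one_le_norm f)).not_ge (S.mem_elementsLE.1 hf)

/-- The number of elements of norm at most `x`. -/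
def count (x : ℝ) : ℝ := (S.elementsLE x).card

lemma count_nonneg (x : ℝ) : 0 ≤ S.count x := Nat.cast_nonneg _

lemma count_mono : Monotone S.count := fun _ _ h =>
  Nat.cast_le.2 (Finset.card_le_card fun _ hf =>
    S.mem_elementsLE.2 ((S.mem_elementsLE.1 hf).trans h))

lemma count_eq_zero {x : ℝ} (hx : x < 1) : S.count x = 0 := by
  rw [count, S.elementsLE_eq_empty hx, Finset.card_empty, Nat.cast_zero]

lemma card_filter_le_apply (x : ℝ) (p : P) (k : ℕ) :
    (((S.elementsLE x).filter fun f => k ≤ f p).card : ℝ) = S.count (x / S.primeNorm p ^ k) := by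
  have hpow : 0 < S.primeNorm p ^ k := pow_pos (S.primeNorm_pos p) k
  have hmem (f : P →₀ ℕ) :
      f + Finsupp.single p k ∈ S.elementsLE x ↔ f ∈ S.elementsLE (x / S.primeNorm p ^ k) := by
    rw [mem_elementsLE, mem_elementsLE, norm_add, norm_single, le_div_iff₀ hpow]
  refine congrArg Nat.cast (Finset.card_bij (fun f _ => f + Finsupp.single p k) ?_ ?_ ?_).symm
  · exact fun f hf => Finset.mem_filter.2 ⟨(hmem f).2 hf, by simp⟩
  · exact fun f _ g _ h => add_right_cancel h
  · intro g hg
    rw [Finset.mem_filter] at hg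
    obtain ⟨f, rfl⟩ := exists_eq_add_single hg.2
    exact ⟨f, (hmem f).1 hg.1, rfl⟩

open Classical in
lemma sum_boole_mem_support (x : ℝ) (p : P) :
    (∑ f ∈ S.elementsLE x, if p ∈ f.support then (1 : ℝ) else 0) =
      S.count (x / S.primeNorm p) := by
  rw [Finset.sum_boole, ← pow_one (S.primeNorm p), ← card_filter_le_apply]
  simp_rw [Finsupp.mem_support_iff, Nat.one_le_iff_ne_zero]

end Basic

section AxiomA

/-- Knopfmacher's Axiom A, in the explicit form that counts elements as `κ u + O(u ^ θ)` for all
`u > 0`. -/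
structure AxiomA (κ θ C : ℝ) : Prop where
  κ_pos : 0 < κ
  θ_pos : 0 < θ
  θ_lt_one : θ < 1
  abs_count_sub_le : ∀ u, 0 < u → |S.count u - κ * u| ≤ C * u ^ θ

lemma exists_axiomA {κ θ : ℝ} (hκ : 0 < κ) (hθ : 0 < θ) (hθ1 : θ < 1)
    (h : (fun u => S.count u - κ * u) =O[atTop] fun u => u ^ θ) : ∃ C, S.AxiomA κ θ C := by
  obtain ⟨c, hc⟩ := h.bound
  obtain ⟨v, hv⟩ := eventually_atTop.1 hc
  refine ⟨max κ (max c (S.count v + κ * v)), hκ, hθ, hθ1, fun u hu => ?_⟩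
  have hupos : 0 < u ^ θ := Real.rpow_pos_of_pos hu θ
  obtain hu1 | hu1 := lt_or_ge u 1
  · rw [S.count_eq_zero hu1, zero_sub, abs_neg, abs_of_pos (by positivity)]
    have hle : u ≤ u ^ θ := Real.self_le_rpow_of_le_one hu.le hu1.le hθ1.le
    exact mul_le_mul (le_max_left _ _) hle hu.le (hκ.le.trans (le_max_left _ _))
  obtain huv | huv := lt_or_ge u v
  · have hpow : 1 ≤ u ^ θ := Real.one_le_rpow hu1 hθ.le
    have hκu : κ * u ≤ κ * v := mul_le_mul_of_nonneg_left huv.le hκ.le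
    calc |S.count u - κ * u| ≤ S.count v + κ * v := by
          rw [abs_le]
          constructor <;>
            linarith [S.count_mono huv.le, S.count_nonneg u, S.count_nonneg v, mul_pos hκ hu]
      _ ≤ max κ (max c (S.count v + κ * v)) := (le_max_right _ _).trans (le_max_right _ _)
      _ ≤ max κ (max c (S.count v + κ * v)) * u ^ θ :=
          le_mul_of_one_le_right (hκ.le.trans (le_max_left _ _)) hpow
  · have hbound := hv u huv
    rw [Real.norm_eq_abs, Real.norm_of_nonneg hupos.le] at hbound
    exact hbound.trans (mul_le_mul_of_nonneg_right
      ((le_max_left _ _).trans (le_max_right _ _)) hupos.le)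

variable {S} {κ θ C : ℝ}

lemma AxiomA.nonneg (hA : S.AxiomA κ θ C) : 0 ≤ C := by
  simpa using (abs_nonneg _).trans (hA.abs_count_sub_le 1 one_pos)

lemma AxiomA.one_sub_pos (hA : S.AxiomA κ θ C) : 0 < 1 - θ := sub_pos.2 hA.θ_lt_one

lemma AxiomA.count_le (hA : S.AxiomA κ θ C) {x : ℝ} (hx : 0 ≤ x) : S.count x ≤ (κ + C) * x := by
  have hC := hA.nonneg
  have hκ := hA.κ_pos
  obtain hx1 | hx1 := lt_or_ge x 1
  · rw [S.count_eq_zero hx1]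
    positivity
  have hpow : x ^ θ ≤ x := Real.rpow_le_self_of_one_le hx1 hA.θ_lt_one.le
  have herror := (abs_le.1 (hA.abs_count_sub_le x (one_pos.trans_le hx1))).2
  linarith [mul_le_mul_of_nonneg_left hpow hC]

lemma AxiomA.sum_norm_rpow_neg_le (hA : S.AxiomA κ θ C) {σ : ℝ} (hσ : 0 ≤ σ) (hσ1 : σ < 1)
    {x : ℝ} (hx : 1 ≤ x) :
    ∑ f ∈ S.elementsLE x, S.norm f ^ (-σ) ≤ (κ + C) / (1 - σ) * x ^ (1 - σ) := by
  have hκC : 0 ≤ κ + C := add_nonneg hA.κ_pos.le hA.nonneg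
  have hsum := sum_mul_rpow_neg_le_of_lt_one (s := S.elementsLE x) (a := fun _ => 1) hσ hσ1 hx
    (fun f hf => ⟨S.one_le_norm f, S.mem_elementsLE.1 hf⟩) (fun t ht => ?_) hκC
  · simpa only [one_mul] using hsum
  · rw [Finset.sum_const, nsmul_eq_mul, mul_one]
    refine le_trans (Nat.cast_le.2 (Finset.card_le_card fun f hf => ?_))
      (hA.count_le (zero_le_one.trans ht.1))
    exact S.mem_elementsLE.2 (Finset.mem_filter.1 hf).2

end AxiomA

end ArithmeticSemigroup

section GeometricSums

lemma sum_range_pow_succ_le {r : ℝ} (hr : 0 ≤ r) (hr1 : r < 1) (K : ℕ) :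
    ∑ k ∈ Finset.range K, r ^ (k + 1) ≤ r / (1 - r) := by
  simp_rw [pow_succ', ← Finset.mul_sum]
  rw [div_eq_mul_inv, ← tsum_geometric_of_lt_one hr hr1]
  exact mul_le_mul_of_nonneg_left
    ((summable_geometric_of_lt_one hr hr1).sum_le_tsum _ fun _ _ => pow_nonneg hr _) hr

lemma abs_sum_range_pow_succ_sub_le {r : ℝ} (hr : 0 ≤ r) (hr2 : r ≤ 1 / 2) (K : ℕ) :
    |∑ k ∈ Finset.range (K + 1), r ^ (k + 1) - r| ≤ 2 * r ^ 2 := by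
  have htail : r / (1 - r) ≤ 2 * r := by
    rw [div_le_iff₀ (by linarith)]
    nlinarith
  have hfactor : ∑ k ∈ Finset.range K, r ^ (k + 1 + 1) = (∑ k ∈ Finset.range K, r ^ (k + 1)) * r :=
    (Finset.sum_mul _ _ _).symm
  rw [Finset.sum_range_succ', zero_add, pow_one, add_sub_cancel_right]
  rw [hfactor, abs_of_nonneg (mul_nonneg (Finset.sum_nonneg fun _ _ => pow_nonneg hr _) hr)]
  linarith [mul_le_mul_of_nonneg_right
    ((sum_range_pow_succ_le hr (by linarith) K).trans htail) hr]

end GeometricSums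

namespace ArithmeticSemigroup

variable {P : Type*} (S : ArithmeticSemigroup P)

section Mertens

/-- Chebyshev's upper bound for the primes of the semigroup. -/
def ChebyshevBound (B : ℝ) : Prop :=
  ∀ x, 1 ≤ x → ∑ p ∈ S.primesLE x, Real.log (S.primeNorm p) ≤ B * x

/-- The sum of `log ‖f‖` over the elements of norm at most `x`. -/
def logSum (x : ℝ) : ℝ := ∑ f ∈ S.elementsLE x, Real.log (S.norm f)

/-- The sum of `log ‖p‖ / ‖p‖` over the primes of norm at most `x`. -/
def primeLogSum (x : ℝ) : ℝ := ∑ p ∈ S.primesLE x, Real.log (S.primeNorm p) / S.primeNorm p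

/-- The sum of `1 / ‖p‖` over the primes of norm at most `x`. -/
def primeInvSum (x : ℝ) : ℝ := ∑ p ∈ S.primesLE x, 1 / S.primeNorm p

lemma logSum_eq_sum_primesLE (x : ℝ) :
    S.logSum x =
      ∑ p ∈ S.primesLE x, Real.log (S.primeNorm p) * ∑ f ∈ S.elementsLE x, (f p : ℝ) := by
  simp_rw [Finset.mul_sum]
  rw [Finset.sum_comm, logSum]
  refine Finset.sum_congr rfl fun f hf => ?_
  rw [log_norm, Finset.sum_subset (S.support_subset_primesLE hf) fun p _ hp => by
    rw [Finsupp.notMem_support_iff.1 hp, Nat.cast_zero, zero_mul]]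
  exact Finset.sum_congr rfl fun p _ => mul_comm _ _

lemma exists_sum_apply_eq_sum_count (x : ℝ) (p : P) :
    ∃ K : ℕ, ∑ f ∈ S.elementsLE x, (f p : ℝ) =
      ∑ k ∈ Finset.range (K + 1), S.count (x / S.primeNorm p ^ (k + 1)) := by
  obtain ⟨K, hK⟩ := ((S.elementsLE x).finite_toSet.image fun f => f p).bddAbove
  refine ⟨K, ?_⟩
  simp_rw [← card_filter_le_apply, Finset.card_filter, Nat.cast_sum]
  rw [Finset.sum_comm]
  refine Finset.sum_congr rfl fun f hf => ?_
  have hfK : f p ≤ K := hK ⟨f, hf, rfl⟩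
  have hfilter : (Finset.range (K + 1)).filter (fun k => k + 1 ≤ f p) = Finset.range (f p) := by
    ext k
    simp only [Finset.mem_filter, Finset.mem_range]
    omega
  rw [← Nat.cast_sum, ← Finset.card_filter, hfilter, Finset.card_range]

variable {S} {κ θ C B : ℝ}

lemma ChebyshevBound.sum_le (hB : S.ChebyshevBound B) {t : ℝ} (ht : 1 ≤ t) {s : Finset P}
    (hs : ∀ p ∈ s, S.primeNorm p ≤ t) : ∑ p ∈ s, Real.log (S.primeNorm p) ≤ B * t :=
  (Finset.sum_le_sum_of_subset_of_nonneg (fun p hp => S.mem_primesLE.2 (hs p hp))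
    fun p _ _ => (S.log_primeNorm_pos p).le).trans (hB t ht)

lemma ChebyshevBound.nonneg (hB : S.ChebyshevBound B) : 0 ≤ B := by
  simpa using hB.sum_le le_rfl (s := ∅) (by simp)

lemma ChebyshevBound.sum_log_mul_rpow_neg_le (hB : S.ChebyshevBound B) {σ : ℝ} (hσ : 0 ≤ σ)
    (hσ1 : σ < 1) {x : ℝ} (hx : 1 ≤ x) :
    ∑ p ∈ S.primesLE x, Real.log (S.primeNorm p) * S.primeNorm p ^ (-σ) ≤
      B / (1 - σ) * x ^ (1 - σ) :=
  sum_mul_rpow_neg_le_of_lt_one hσ hσ1 hx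
    (fun p hp => ⟨(S.one_lt_primeNorm p).le, S.mem_primesLE.1 hp⟩)
    (fun _ ht => hB.sum_le ht.1 fun _ hp => (Finset.mem_filter.1 hp).2) hB.nonneg

lemma ChebyshevBound.summable_log_mul_rpow_neg (hB : S.ChebyshevBound B) {σ : ℝ} (hσ : 1 < σ) :
    Summable fun p => Real.log (S.primeNorm p) * S.primeNorm p ^ (-σ) :=
  summable_mul_rpow_neg_of_one_lt hσ (fun p => (S.log_primeNorm_pos p).le)
    (fun p => (S.one_lt_primeNorm p).le) fun _ ht _ hs => hB.sum_le ht hs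

lemma AxiomA.sum_log_div_norm_le (hA : S.AxiomA κ θ C) {x : ℝ} (hx : 1 ≤ x) :
    ∑ f ∈ S.elementsLE x, Real.log (x / S.norm f) ≤ 4 * (κ + C) * x := by
  have hx0 : 0 < x := one_pos.trans_le hx
  have hlog (f : P →₀ ℕ) :
      Real.log (x / S.norm f) ≤ 2 * x ^ (1 / 2 : ℝ) * S.norm f ^ (-(1 / 2) : ℝ) := by
    have hf := S.norm_pos f
    refine (Real.log_le_rpow_div (div_pos hx0 hf).le one_half_pos).trans_eq ?_
    rw [Real.div_rpow hx0.le hf.le, Real.rpow_neg hf.le]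
    ring
  calc ∑ f ∈ S.elementsLE x, Real.log (x / S.norm f)
      ≤ ∑ f ∈ S.elementsLE x, 2 * x ^ (1 / 2 : ℝ) * S.norm f ^ (-(1 / 2) : ℝ) :=
        Finset.sum_le_sum fun f _ => hlog f
    _ ≤ 2 * x ^ (1 / 2 : ℝ) * ((κ + C) / (1 - 1 / 2) * x ^ (1 - 1 / 2 : ℝ)) := by
        rw [← Finset.mul_sum]
        exact mul_le_mul_of_nonneg_left
          (hA.sum_norm_rpow_neg_le one_half_pos.le one_half_lt_one hx) (by positivity)
    _ = 4 * (κ + C) * (x ^ (1 / 2 : ℝ) * x ^ (1 - 1 / 2 : ℝ)) := by ring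
    _ = 4 * (κ + C) * x := by rw [← Real.rpow_add hx0, add_sub_cancel, Real.rpow_one]

lemma AxiomA.abs_logSum_sub_le (hA : S.AxiomA κ θ C) {x : ℝ} (hx : 1 ≤ x) :
    |S.logSum x - κ * x * Real.log x| ≤ (C / (1 - θ) + 4 * (κ + C)) * x := by
  have hx0 : 0 < x := one_pos.trans_le hx
  have hlogx := Real.log_nonneg hx
  have hC := hA.nonneg
  have hsplit : S.logSum x =
      S.count x * Real.log x - ∑ f ∈ S.elementsLE x, Real.log (x / S.norm f) := by
    rw [count, ← nsmul_eq_mul, ← Finset.sum_const, ← Finset.sum_sub_distrib, logSum]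
    refine Finset.sum_congr rfl fun f _ => ?_
    rw [Real.log_div hx0.ne' (S.norm_pos f).ne', sub_sub_cancel]
  have hnonneg : 0 ≤ ∑ f ∈ S.elementsLE x, Real.log (x / S.norm f) :=
    Finset.sum_nonneg fun f hf =>
      Real.log_nonneg ((one_le_div (S.norm_pos f)).2 (S.mem_elementsLE.1 hf))
  have hcount : |(S.count x - κ * x) * Real.log x| ≤ C / (1 - θ) * x := by
    rw [abs_mul, abs_of_nonneg hlogx]
    calc |S.count x - κ * x| * Real.log x
        ≤ C * x ^ θ * (x ^ (1 - θ) / (1 - θ)) :=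
          mul_le_mul (hA.abs_count_sub_le x hx0) (Real.log_le_rpow_div hx0.le hA.one_sub_pos)
            hlogx (by positivity)
      _ = C / (1 - θ) * (x ^ θ * x ^ (1 - θ)) := by ring
      _ = C / (1 - θ) * x := by rw [← Real.rpow_add hx0, add_sub_cancel, Real.rpow_one]
  have hlog := hA.sum_log_div_norm_le hx
  rw [hsplit]
  rw [abs_le] at hcount ⊢
  constructor <;> linarith [hcount.1, hcount.2]

lemma AxiomA.one_sub_two_rpow_neg_pos (hA : S.AxiomA κ θ C) : 0 < 1 - (2 : ℝ) ^ (-θ) :=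
  sub_pos.2 (Real.rpow_lt_one_of_one_lt_of_neg one_lt_two (neg_neg_of_pos hA.θ_pos))

lemma AxiomA.abs_count_div_sub_le (hA : S.AxiomA κ θ C) {x N : ℝ} (hx : 0 < x) (hN : 0 < N) :
    |S.count (x / N) - κ * x * N⁻¹| ≤ C * x ^ θ * N ^ (-θ) := by
  have herror := hA.abs_count_sub_le (x / N) (div_pos hx hN)
  rwa [Real.div_rpow hx.le hN.le, div_eq_mul_inv, div_eq_mul_inv, ← Real.rpow_neg hN.le,
    ← mul_assoc, ← mul_assoc] at herror

lemma AxiomA.abs_sum_count_div_pow_sub_le (hA : S.AxiomA κ θ C) {x N : ℝ} (hx : 0 < x)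
    (hN : 2 ≤ N) (K : ℕ) :
    |∑ k ∈ Finset.range K, S.count (x / N ^ (k + 1)) -
        κ * x * ∑ k ∈ Finset.range K, N⁻¹ ^ (k + 1)| ≤
      C / (1 - 2 ^ (-θ)) * x ^ θ * N ^ (-θ) := by
  have hN0 : 0 < N := two_pos.trans_le hN
  have hC := hA.nonneg
  set r := N ^ (-θ)
  have hr : 0 ≤ r := Real.rpow_nonneg hN0.le _
  have hr2 : r ≤ 2 ^ (-θ) := Real.rpow_le_rpow_of_nonpos two_pos hN (neg_nonpos.2 hA.θ_pos.le)
  have h2 : 0 < 1 - (2 : ℝ) ^ (-θ) := hA.one_sub_two_rpow_neg_pos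
  rw [Finset.mul_sum, ← Finset.sum_sub_distrib]
  calc |∑ k ∈ Finset.range K, (S.count (x / N ^ (k + 1)) - κ * x * N⁻¹ ^ (k + 1))|
      ≤ ∑ k ∈ Finset.range K, C * x ^ θ * r ^ (k + 1) := by
        refine (Finset.abs_sum_le_sum_abs _ _).trans (Finset.sum_le_sum fun k _ => ?_)
        rw [inv_pow, ← Real.rpow_mul_natCast hN0.le, mul_comm (-θ), Real.rpow_natCast_mul hN0.le]
        exact hA.abs_count_div_sub_le hx (pow_pos hN0 _)
    _ ≤ C * x ^ θ * (r / (1 - r)) := by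
        rw [← Finset.mul_sum]
        exact mul_le_mul_of_nonneg_left (sum_range_pow_succ_le hr (by linarith) _) (by positivity)
    _ ≤ C * x ^ θ * (r / (1 - 2 ^ (-θ))) := by gcongr
    _ = C / (1 - 2 ^ (-θ)) * x ^ θ * r := by ring

lemma AxiomA.abs_sum_apply_sub_le (hA : S.AxiomA κ θ C) {x : ℝ} (hx : 0 < x) (p : P) :
    |∑ f ∈ S.elementsLE x, (f p : ℝ) - κ * x * (S.primeNorm p)⁻¹| ≤
      2 * κ * x * S.primeNorm p ^ (-2 : ℝ) +
        C / (1 - 2 ^ (-θ)) * x ^ θ * S.primeNorm p ^ (-θ) := by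
  obtain ⟨K, hK⟩ := S.exists_sum_apply_eq_sum_count x p
  have hN := S.two_le_primeNorm p
  set N := S.primeNorm p
  have hN0 : 0 < N := two_pos.trans_le hN
  have hκx : 0 < κ * x := mul_pos hA.κ_pos hx
  have hgeom : |κ * x * ∑ k ∈ Finset.range (K + 1), N⁻¹ ^ (k + 1) - κ * x * N⁻¹| ≤
      2 * κ * x * N ^ (-2 : ℝ) := by
    have hhalf : N⁻¹ ≤ 1 / 2 := by
      rw [one_div]
      exact inv_anti₀ two_pos hN
    have hsq : N ^ (-2 : ℝ) = N⁻¹ ^ 2 := by rw [Real.rpow_neg hN0.le, inv_pow, Real.rpow_two]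
    rw [← mul_sub, abs_mul, abs_of_pos hκx, hsq]
    refine (mul_le_mul_of_nonneg_left
      (abs_sum_range_pow_succ_sub_le (inv_pos.2 hN0).le hhalf K) hκx.le).trans_eq (by ring)
  rw [hK, add_comm (2 * κ * x * N ^ (-2 : ℝ))]
  exact (abs_sub_le _ _ _).trans
    (add_le_add (hA.abs_sum_count_div_pow_sub_le hx hN (K + 1)) hgeom)

lemma AxiomA.exists_abs_logSum_sub_mul_primeLogSum_le (hA : S.AxiomA κ θ C)
    (hB : S.ChebyshevBound B) :
    ∃ D, ∀ x, 1 ≤ x → |S.logSum x - κ * x * S.primeLogSum x| ≤ D * x := by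
  have hsummable := hB.summable_log_mul_rpow_neg one_lt_two
  set c := C / (1 - 2 ^ (-θ))
  set D := 2 * κ * ∑' p, Real.log (S.primeNorm p) * S.primeNorm p ^ (-2 : ℝ)
  have hc : 0 ≤ c := div_nonneg hA.nonneg hA.one_sub_two_rpow_neg_pos.le
  refine ⟨D + c * (B / (1 - θ)), fun x hx => ?_⟩
  have hx0 : 0 < x := one_pos.trans_le hx
  have hκ := hA.κ_pos
  rw [logSum_eq_sum_primesLE, primeLogSum, Finset.mul_sum, ← Finset.sum_sub_distrib]
  calc _ ≤ ∑ p ∈ S.primesLE x,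
        (2 * κ * x * (Real.log (S.primeNorm p) * S.primeNorm p ^ (-2 : ℝ)) +
          c * x ^ θ * (Real.log (S.primeNorm p) * S.primeNorm p ^ (-θ))) := by
        refine (Finset.abs_sum_le_sum_abs _ _).trans (Finset.sum_le_sum fun p _ => ?_)
        have hlog := S.log_primeNorm_pos p
        rw [div_eq_mul_inv, mul_left_comm, ← mul_sub, abs_mul, abs_of_pos hlog]
        refine (mul_le_mul_of_nonneg_left (hA.abs_sum_apply_sub_le hx0 p) hlog.le).trans_eq ?_
        ring
    _ ≤ D * x + c * x ^ θ * (B / (1 - θ) * x ^ (1 - θ)) := by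
        rw [Finset.sum_add_distrib, ← Finset.mul_sum, ← Finset.mul_sum, mul_right_comm (2 * κ)]
        gcongr
        · refine mul_le_mul_of_nonneg_left (hsummable.sum_le_tsum _ fun p _ => ?_) (by positivity)
          exact mul_nonneg (S.log_primeNorm_pos p).le (Real.rpow_nonneg (S.primeNorm_pos p).le _)
        · exact hB.sum_log_mul_rpow_neg_le hA.θ_pos.le hA.θ_lt_one hx
    _ = D * x + c * (B / (1 - θ)) * (x ^ θ * x ^ (1 - θ)) := by ring
    _ = (D + c * (B / (1 - θ))) * x := by
        rw [← Real.rpow_add hx0, add_sub_cancel, Real.rpow_one]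
        ring

theorem AxiomA.exists_abs_primeLogSum_sub_log_le (hA : S.AxiomA κ θ C)
    (hB : S.ChebyshevBound B) :
    ∃ D, ∀ x, 1 ≤ x → |S.primeLogSum x - Real.log x| ≤ D := by
  obtain ⟨D, hD⟩ := hA.exists_abs_logSum_sub_mul_primeLogSum_le hB
  refine ⟨(D + (C / (1 - θ) + 4 * (κ + C))) / κ, fun x hx => ?_⟩
  have hx0 : 0 < x := one_pos.trans_le hx
  have hκ := hA.κ_pos
  have hprimes := hD x hx
  have hlogSum := hA.abs_logSum_sub_le hx
  have hmul : |S.primeLogSum x - Real.log x| * (κ * x) ≤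
      (D + (C / (1 - θ) + 4 * (κ + C))) * x := by
    rw [← abs_of_pos (mul_pos hκ hx0), ← abs_mul]
    rw [abs_le] at hprimes hlogSum ⊢
    constructor <;> linarith [hprimes.1, hprimes.2, hlogSum.1, hlogSum.2]
  rw [le_div_iff₀ hκ]
  exact le_of_mul_le_mul_right (by rwa [mul_assoc]) hx0

lemma abs_primeInvSum_sub_sub_le {D : ℝ}
    (hD : ∀ x, 1 ≤ x → |S.primeLogSum x - Real.log x| ≤ D) {x y : ℝ} (hx : 1 < x) (hxy : x ≤ y) :
    |S.primeInvSum y - S.primeInvSum x - (Real.log (Real.log y) - Real.log (Real.log x))| ≤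
      2 * D / Real.log x := by
  classical
  have hpartial {t : ℝ} (ht : t ∈ Set.Icc x y) :
      ∑ p ∈ S.primesLE y \ S.primesLE x with S.primeNorm p ≤ t,
        Real.log (S.primeNorm p) / S.primeNorm p = S.primeLogSum t - S.primeLogSum x := by
    rw [primeLogSum, primeLogSum, ← Finset.sum_sdiff (S.primesLE_subset ht.1),
      add_sub_cancel_right]
    congr 1
    ext p
    simp only [Finset.mem_filter, Finset.mem_sdiff, mem_primesLE]
    exact ⟨fun h => ⟨h.2, h.1.2⟩, fun h => ⟨⟨h.1.trans ht.2, h.2⟩, h.1⟩⟩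
  have hinv : S.primeInvSum y - S.primeInvSum x = ∑ p ∈ S.primesLE y \ S.primesLE x,
      Real.log (S.primeNorm p) / S.primeNorm p * (Real.log (S.primeNorm p))⁻¹ := by
    rw [primeInvSum, primeInvSum, ← Finset.sum_sdiff (S.primesLE_subset hxy),
      add_sub_cancel_right]
    refine Finset.sum_congr rfl fun p _ => ?_
    have := (S.log_primeNorm_pos p).ne'
    field_simp
  rw [hinv]
  refine abs_sum_div_log_sub_log_log_le hx hxy (fun p hp => ?_) fun t ht => ?_
  · rw [Finset.mem_sdiff, mem_primesLE, mem_primesLE, not_le] at hp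
    exact ⟨hp.2.le, hp.1⟩
  · have hDt := abs_le.1 (hD t (hx.le.trans ht.1))
    have hDx := abs_le.1 (hD x hx.le)
    rw [hpartial ht, abs_le]
    constructor <;> linarith [hDt.1, hDt.2, hDx.1, hDx.2]

theorem AxiomA.exists_abs_primeInvSum_sub_le (hA : S.AxiomA κ θ C) (hB : S.ChebyshevBound B)
    {A : ℝ} (hMertens : Tendsto (fun x => S.primeInvSum x - Real.log (Real.log x)) atTop (𝓝 A)) :
    ∃ D, ∀ x, 1 < x → |S.primeInvSum x - (Real.log (Real.log x) + A)| ≤ D / Real.log x := by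
  obtain ⟨D, hD⟩ := hA.exists_abs_primeLogSum_sub_log_le hB
  refine ⟨2 * D, fun x hx => ?_⟩
  have hlim := (tendsto_const_nhds (x := S.primeInvSum x - Real.log (Real.log x))).sub hMertens
  rw [← sub_sub]
  refine le_of_tendsto hlim.abs ?_
  filter_upwards [eventually_ge_atTop x] with y hxy
  rw [abs_sub_comm, sub_sub_sub_comm]
  exact abs_primeInvSum_sub_sub_le hD hx hxy

end Mertens

section OmegaSum

/-- The sum of the numbers of distinct primes dividing `a + b` (in multiplicative notation, `ab`),
over the elements `a` of norm at most `y`. -/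
def omegaSum (b : P →₀ ℕ) (y : ℝ) : ℝ := ∑ a ∈ S.elementsLE y, ((a + b).support.card : ℝ)

/-- The expected number of primes of `b` that do not divide a random element of the semigroup. -/
def coprimeWeight (b : P →₀ ℕ) : ℝ := ∑ p ∈ b.support, (1 - (S.primeNorm p)⁻¹)

lemma coprimeWeight_nonneg (b : P →₀ ℕ) : 0 ≤ S.coprimeWeight b :=
  Finset.sum_nonneg fun p _ => sub_nonneg.2 (inv_le_one_of_one_le₀ (S.one_lt_primeNorm p).le)

lemma coprimeWeight_le_card_support (b : P →₀ ℕ) : S.coprimeWeight b ≤ b.support.card := by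
  rw [coprimeWeight, Finset.cast_card]
  exact Finset.sum_le_sum fun p _ => sub_le_self _ (inv_pos.2 (S.primeNorm_pos p)).le

lemma omegaSum_nonneg (b : P →₀ ℕ) (y : ℝ) : 0 ≤ S.omegaSum b y :=
  Finset.sum_nonneg fun _ _ => Nat.cast_nonneg _

lemma omegaSum_eq_zero (b : P →₀ ℕ) {y : ℝ} (hy : y < 1) : S.omegaSum b y = 0 := by
  rw [omegaSum, S.elementsLE_eq_empty hy, Finset.sum_empty]

lemma omegaSum_zero_left (y : ℝ) :
    S.omegaSum 0 y = ∑ p ∈ S.primesLE y, S.count (y / S.primeNorm p) := by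
  classical
  simp_rw [← sum_boole_mem_support]
  rw [Finset.sum_comm, omegaSum]
  refine Finset.sum_congr rfl fun a ha => ?_
  rw [add_zero, Finset.sum_ite_mem, Finset.inter_eq_right.2 (S.support_subset_primesLE ha),
    Finset.cast_card]

lemma omegaSum_eq_omegaSum_zero_add (b : P →₀ ℕ) (y : ℝ) :
    S.omegaSum b y =
      S.omegaSum 0 y + ∑ p ∈ b.support, (S.count y - S.count (y / S.primeNorm p)) := by
  classical
  have hcard (a : P →₀ ℕ) : ((a + b).support.card : ℝ) =
      a.support.card + ∑ p ∈ b.support, (1 - if p ∈ a.support then (1 : ℝ) else 0) := by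
    have hunion : (a + b).support = a.support ∪ b.support \ a.support := by
      ext p
      simp only [Finsupp.mem_support_iff, Finsupp.add_apply, Finset.mem_union, Finset.mem_sdiff]
      omega
    rw [hunion, Finset.card_union_of_disjoint Finset.disjoint_sdiff, Nat.cast_add,
      Finset.sdiff_eq_filter, Finset.natCast_card_filter]
    refine congrArg _ (Finset.sum_congr rfl fun p _ => ?_)
    split_ifs <;> simp_all
  simp_rw [omegaSum, hcard, add_zero]
  rw [Finset.sum_add_distrib, Finset.sum_comm]
  simp_rw [Finset.sum_sub_distrib, sum_boole_mem_support, count, Finset.cast_card]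

variable {S} {κ θ C B A : ℝ}

lemma AxiomA.omegaSum_le (hA : S.AxiomA κ θ C) (b : P →₀ ℕ) {y : ℝ} (hy : 1 ≤ y) :
    S.omegaSum b y ≤ 2 * (κ + C) * y * (Real.log y + Real.log (S.norm b)) := by
  have hcard {a : P →₀ ℕ} (ha : a ∈ S.elementsLE y) :
      ((a + b).support.card : ℝ) ≤ 2 * (Real.log y + Real.log (S.norm b)) := by
    refine (S.card_support_le_two_mul_log_norm _).trans ?_
    rw [norm_add, Real.log_mul (S.norm_pos a).ne' (S.norm_pos b).ne']
    gcongr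
    · exact S.norm_pos a
    · exact S.mem_elementsLE.1 ha
  calc S.omegaSum b y ≤ S.count y * (2 * (Real.log y + Real.log (S.norm b))) := by
        rw [count, ← nsmul_eq_mul, ← Finset.sum_const]
        exact Finset.sum_le_sum fun a ha => hcard ha
    _ ≤ (κ + C) * y * (2 * (Real.log y + Real.log (S.norm b))) :=
        mul_le_mul_of_nonneg_right (hA.count_le (zero_le_one.trans hy)) (mul_nonneg zero_le_two
          (add_nonneg (Real.log_nonneg hy) (S.log_norm_nonneg b)))
    _ = 2 * (κ + C) * y * (Real.log y + Real.log (S.norm b)) := by ring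

-- Here `log y = log ‖p‖ + log (y / ‖p‖)`, and both terms are `O(log ‖p‖ * (y / ‖p‖) ^ δ)`.
lemma log_mul_rpow_neg_le {y δ σ : ℝ} (hδ : 0 < δ) {p : P} (hp : S.primeNorm p ≤ y) :
    Real.log y * S.primeNorm p ^ (-σ) ≤
      (1 + 2 / δ) * y ^ δ * (Real.log (S.primeNorm p) * S.primeNorm p ^ (-(σ + δ))) := by
  have hlog := S.one_half_le_log_primeNorm p
  have hN := S.primeNorm_pos p
  set N := S.primeNorm p
  have hy := hN.trans_le hp
  have hpow : 1 ≤ (y / N) ^ δ := Real.one_le_rpow ((one_le_div hN).2 hp) hδ.le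
  have hratio : Real.log (y / N) ≤ (y / N) ^ δ / δ := Real.log_le_rpow_div (div_pos hy hN).le hδ
  have hlogy : Real.log y ≤ (1 + 2 / δ) * ((y / N) ^ δ * Real.log N) := calc
    Real.log y = Real.log N + Real.log (y / N) := by
      rw [Real.log_div hy.ne' hN.ne', add_sub_cancel]
    _ ≤ (y / N) ^ δ * Real.log N + (y / N) ^ δ / δ * (2 * Real.log N) :=
      add_le_add (le_mul_of_one_le_left (by linarith) hpow)
        (hratio.trans (le_mul_of_one_le_right (by positivity) (by linarith)))
    _ = (1 + 2 / δ) * ((y / N) ^ δ * Real.log N) := by ring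
  refine (mul_le_mul_of_nonneg_right hlogy (Real.rpow_nonneg hN.le _)).trans_eq ?_
  rw [Real.div_rpow hy.le hN.le, neg_add, Real.rpow_add hN, Real.rpow_neg hN.le δ]
  ring

lemma ChebyshevBound.exists_log_mul_sum_rpow_neg_le (hB : S.ChebyshevBound B) {σ : ℝ}
    (hσ : 0 ≤ σ) (hσ1 : σ < 1) :
    ∃ D, ∀ y, 1 ≤ y →
      Real.log y * ∑ p ∈ S.primesLE y, S.primeNorm p ^ (-σ) ≤ D * y ^ (1 - σ) := by
  obtain ⟨δ, hδ, hδ1⟩ := exists_between (sub_pos.2 hσ1)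
  refine ⟨(1 + 2 / δ) * (B / (1 - (σ + δ))), fun y hy => ?_⟩
  have hy0 : 0 < y := one_pos.trans_le hy
  calc Real.log y * ∑ p ∈ S.primesLE y, S.primeNorm p ^ (-σ)
      ≤ (1 + 2 / δ) * y ^ δ *
          ∑ p ∈ S.primesLE y, Real.log (S.primeNorm p) * S.primeNorm p ^ (-(σ + δ)) := by
        rw [Finset.mul_sum, Finset.mul_sum]
        exact Finset.sum_le_sum fun p hp => log_mul_rpow_neg_le hδ (S.mem_primesLE.1 hp)
    _ ≤ (1 + 2 / δ) * y ^ δ * (B / (1 - (σ + δ)) * y ^ (1 - (σ + δ))) :=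
        mul_le_mul_of_nonneg_left
          (hB.sum_log_mul_rpow_neg_le (by linarith) (by linarith) hy) (by positivity)
    _ = (1 + 2 / δ) * (B / (1 - (σ + δ))) * (y ^ δ * y ^ (1 - (σ + δ))) := by ring
    _ = (1 + 2 / δ) * (B / (1 - (σ + δ))) * y ^ (1 - σ) := by
        rw [← Real.rpow_add hy0]
        ring_nf

lemma AxiomA.exists_abs_omegaSum_zero_sub_le (hA : S.AxiomA κ θ C) (hB : S.ChebyshevBound B)
    (hMertens : Tendsto (fun x => S.primeInvSum x - Real.log (Real.log x)) atTop (𝓝 A)) :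
    ∃ D, ∀ y, 1 < y →
      |S.omegaSum 0 y - κ * y * (Real.log (Real.log y) + A)| ≤ D * (y / Real.log y) := by
  obtain ⟨D, hD⟩ := hB.exists_log_mul_sum_rpow_neg_le hA.θ_pos.le hA.θ_lt_one
  obtain ⟨E, hE⟩ := hA.exists_abs_primeInvSum_sub_le hB hMertens
  refine ⟨C * D + κ * E, fun y hy => ?_⟩
  have hy0 : 0 < y := one_pos.trans hy
  have hlog := Real.log_pos hy
  have hC := hA.nonneg
  have hκy : 0 < κ * y := mul_pos hA.κ_pos hy0
  have hcount : |S.omegaSum 0 y - κ * y * S.primeInvSum y| ≤ C * D * (y / Real.log y) := by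
    simp_rw [omegaSum_zero_left, primeInvSum, one_div]
    rw [Finset.mul_sum, ← Finset.sum_sub_distrib]
    calc |∑ p ∈ S.primesLE y, (S.count (y / S.primeNorm p) - κ * y * (S.primeNorm p)⁻¹)|
        ≤ C * y ^ θ * ∑ p ∈ S.primesLE y, S.primeNorm p ^ (-θ) := by
          rw [Finset.mul_sum]
          exact (Finset.abs_sum_le_sum_abs _ _).trans (Finset.sum_le_sum fun p _ =>
            hA.abs_count_div_sub_le hy0 (S.primeNorm_pos p))
      _ ≤ C * y ^ θ * (D * y ^ (1 - θ) / Real.log y) := by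
          refine mul_le_mul_of_nonneg_left ?_ (by positivity)
          rw [le_div_iff₀' hlog]
          exact hD y hy.le
      _ = C * D * ((y ^ θ * y ^ (1 - θ)) / Real.log y) := by ring
      _ = C * D * (y / Real.log y) := by
          rw [← Real.rpow_add hy0, add_sub_cancel, Real.rpow_one]
  have hprime : |κ * y * S.primeInvSum y - κ * y * (Real.log (Real.log y) + A)| ≤
      κ * E * (y / Real.log y) := by
    rw [← mul_sub, abs_mul, abs_of_pos hκy]
    exact (mul_le_mul_of_nonneg_left (hE y hy) hκy.le).trans_eq (by ring)
  rw [add_mul]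
  exact (abs_sub_le _ _ _).trans (add_le_add hcount hprime)

lemma AxiomA.abs_count_sub_count_div_sub_le (hA : S.AxiomA κ θ C) {y : ℝ} (hy : 1 < y) (p : P) :
    |S.count y - S.count (y / S.primeNorm p) - κ * y * (1 - (S.primeNorm p)⁻¹)| ≤
      2 * C / (1 - θ) * (y / Real.log y) := by
  have hy0 : 0 < y := one_pos.trans hy
  have hlog := Real.log_pos hy
  have hC := hA.nonneg
  have hθ := hA.one_sub_pos
  have hpow : y ^ θ ≤ 1 / (1 - θ) * (y / Real.log y) := by
    rw [div_mul_div_comm, one_mul, le_div_iff₀ (mul_pos hθ hlog)]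
    calc y ^ θ * ((1 - θ) * Real.log y) ≤ y ^ θ * y ^ (1 - θ) := by
          refine mul_le_mul_of_nonneg_left ?_ (Real.rpow_nonneg hy0.le _)
          exact (le_div_iff₀' hθ).1 (Real.log_le_rpow_div hy0.le hθ)
      _ = y := by rw [← Real.rpow_add hy0, add_sub_cancel, Real.rpow_one]
  have hN : S.primeNorm p ^ (-θ) ≤ 1 :=
    Real.rpow_le_one_of_one_le_of_nonpos (S.one_lt_primeNorm p).le (neg_nonpos.2 hA.θ_pos.le)
  have hcount := hA.abs_count_sub_le y hy0
  have hcount_div : |S.count (y / S.primeNorm p) - κ * y * (S.primeNorm p)⁻¹| ≤ C * y ^ θ :=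
    (hA.abs_count_div_sub_le hy0 (S.primeNorm_pos p)).trans
      (mul_le_of_le_one_right (by positivity) hN)
  calc |S.count y - S.count (y / S.primeNorm p) - κ * y * (1 - (S.primeNorm p)⁻¹)|
      ≤ 2 * C * y ^ θ := by
        rw [abs_le] at hcount hcount_div ⊢
        constructor <;> linarith [hcount.1, hcount.2, hcount_div.1, hcount_div.2]
    _ ≤ 2 * C * (1 / (1 - θ) * (y / Real.log y)) := by gcongr
    _ = 2 * C / (1 - θ) * (y / Real.log y) := by ring

theorem AxiomA.exists_abs_omegaSum_sub_le (hA : S.AxiomA κ θ C) (hB : S.ChebyshevBound B)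
    (hMertens : Tendsto (fun x => S.primeInvSum x - Real.log (Real.log x)) atTop (𝓝 A)) :
    ∃ D, 0 ≤ D ∧ ∀ b y, 1 < y →
      |S.omegaSum b y - κ * y * (Real.log (Real.log y) + A + S.coprimeWeight b)| ≤
        D * (1 + Real.log (S.norm b)) * (y / Real.log y) := by
  obtain ⟨D, hD⟩ := hA.exists_abs_omegaSum_zero_sub_le hB hMertens
  set E := 2 * C / (1 - θ)
  have hE : 0 ≤ E := div_nonneg (mul_nonneg zero_le_two hA.nonneg) hA.one_sub_pos.le
  refine ⟨max D (2 * E), (mul_nonneg zero_le_two hE).trans (le_max_right _ _), fun b y hy => ?_⟩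
  have hdiv : 0 ≤ y / Real.log y := div_nonneg (one_pos.trans hy).le (Real.log_pos hy).le
  have hb := S.log_norm_nonneg b
  have hsplit : S.omegaSum b y - κ * y * (Real.log (Real.log y) + A + S.coprimeWeight b) =
      (S.omegaSum 0 y - κ * y * (Real.log (Real.log y) + A)) + ∑ p ∈ b.support,
        (S.count y - S.count (y / S.primeNorm p) - κ * y * (1 - (S.primeNorm p)⁻¹)) := by
    rw [omegaSum_eq_omegaSum_zero_add, coprimeWeight, Finset.sum_sub_distrib _ (fun p => κ * y * _),
      ← Finset.mul_sum]
    ring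
  calc |S.omegaSum b y - κ * y * (Real.log (Real.log y) + A + S.coprimeWeight b)|
      ≤ D * (y / Real.log y) + b.support.card * (E * (y / Real.log y)) := by
        rw [hsplit, ← nsmul_eq_mul, ← Finset.sum_const]
        refine (abs_add_le _ _).trans (add_le_add (hD y hy) ?_)
        exact (Finset.abs_sum_le_sum_abs _ _).trans
          (Finset.sum_le_sum fun p _ => hA.abs_count_sub_count_div_sub_le hy p)
    _ ≤ D * (y / Real.log y) + 2 * Real.log (S.norm b) * (E * (y / Real.log y)) := by
        gcongr
        exact S.card_support_le_two_mul_log_norm b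
    _ = (D + 2 * E * Real.log (S.norm b)) * (y / Real.log y) := by ring
    _ ≤ max D (2 * E) * (1 + Real.log (S.norm b)) * (y / Real.log y) := by
        rw [mul_one_add]
        gcongr
        · exact le_max_left _ _
        · exact le_max_right _ _

end OmegaSum

end ArithmeticSemigroup

section EulerProduct

/-- Every nonzero exponent of `b` lies in `t`. -/
def HasExponentsIn {P : Type*} (t : Finset ℕ) (b : P →₀ ℕ) : Prop := ∀ p ∈ b.support, b p ∈ t

variable {P : Type*} {t : Finset ℕ}

lemma HasExponentsIn.apply_mem_insert_zero {b : P →₀ ℕ} (hb : HasExponentsIn t b) (p : P) :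
    b p ∈ insert 0 t := by
  by_cases hp : p ∈ b.support
  · exact Finset.mem_insert_of_mem (hb p hp)
  · exact Finsupp.notMem_support_iff.1 hp ▸ Finset.mem_insert_self 0 t

lemma mem_finsupp_insert_zero_iff {s : Finset P} {b : P →₀ ℕ} :
    b ∈ s.finsupp (fun _ => insert 0 t) ↔ b.support ⊆ s ∧ HasExponentsIn t b := by
  rw [Finset.mem_finsupp_iff]
  refine and_congr_right fun hs =>
    ⟨fun hb p hp => ?_, fun hb p _ => hb.apply_mem_insert_zero p⟩
  exact Finset.mem_of_mem_insert_of_ne (hb p (hs hp)) (Finsupp.mem_support_iff.1 hp)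

variable {u : P → ℕ → ℝ}

lemma sum_finsupp_insert_zero_prod (ht : 0 ∉ t) (hu0 : ∀ p, u p 0 = 1) (s : Finset P) :
    ∑ b ∈ s.finsupp (fun _ => insert 0 t), b.prod u = ∏ p ∈ s, (1 + ∑ k ∈ t, u p k) := by
  classical
  have hlocal (p : P) : 1 + ∑ k ∈ t, u p k = ∑ k ∈ insert 0 t, u p k := by
    rw [Finset.sum_insert ht, hu0]
  simp_rw [hlocal]
  rw [Finset.prod_sum, Finset.finsupp, Finset.sum_map]
  refine Finset.sum_congr (by congr!) fun f _ => ?_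
  refine (Finsupp.prod_of_support_subset _ (s := s) (Finsupp.support_indicator_subset s f) _
    fun p _ => hu0 p).trans ?_
  rw [← Finset.prod_attach]
  exact Finset.prod_congr rfl fun p _ => by simp [Finsupp.indicator]

open Classical in
/-- The elements with exponents in `t` all of whose primes lie in `s`. -/
def elementsSupportedOn (t : Finset ℕ) (s : Finset P) :
    Finset {b : P →₀ ℕ // HasExponentsIn t b} :=
  (s.finsupp fun _ => insert 0 t).subtype (HasExponentsIn t)

lemma mem_elementsSupportedOn {s : Finset P} {b : {b : P →₀ ℕ // HasExponentsIn t b}} :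
    b ∈ elementsSupportedOn t s ↔ b.1.support ⊆ s := by
  classical
  rw [elementsSupportedOn, Finset.mem_subtype, mem_finsupp_insert_zero_iff, and_iff_left b.2]

lemma tendsto_elementsSupportedOn : Tendsto (elementsSupportedOn (P := P) t) atTop atTop :=
  tendsto_atTop_finset_of_monotone
    (fun _ _ hs _ hb => mem_elementsSupportedOn.2 ((mem_elementsSupportedOn.1 hb).trans hs))
    fun b => ⟨b.1.support, mem_elementsSupportedOn.2 subset_rfl⟩

lemma sum_elementsSupportedOn_prod (ht : 0 ∉ t) (hu0 : ∀ p, u p 0 = 1) (s : Finset P) :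
    ∑ b ∈ elementsSupportedOn t s, b.1.prod u = ∏ p ∈ s, (1 + ∑ k ∈ t, u p k) := by
  classical
  rw [← sum_finsupp_insert_zero_prod ht hu0]
  exact Finset.sum_subtype_of_mem (fun b : P →₀ ℕ => b.prod u)
    fun b hb => (mem_finsupp_insert_zero_iff.1 hb).2

lemma summable_prod_of_hasExponentsIn (ht : 0 ∉ t) (hu0 : ∀ p, u p 0 = 1)
    (hu : ∀ p k, 0 ≤ u p k) (hsummable : Summable fun p => ∑ k ∈ t, u p k) :
    Summable fun b : {b : P →₀ ℕ // HasExponentsIn t b} => b.1.prod u := by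
  classical
  have hprod (b : {b : P →₀ ℕ // HasExponentsIn t b}) : 0 ≤ b.1.prod u :=
    Finset.prod_nonneg fun p _ => hu p _
  have hlocal (p : P) : 0 ≤ ∑ k ∈ t, u p k := Finset.sum_nonneg fun k _ => hu p k
  refine summable_of_sum_le hprod (c := Real.exp (∑' p, ∑ k ∈ t, u p k)) fun v => ?_
  set s := v.biUnion fun b => b.1.support
  have hv : v ⊆ elementsSupportedOn t s := fun b hb => mem_elementsSupportedOn.2
    (Finset.subset_biUnion_of_mem (fun b : {b // HasExponentsIn t b} => b.1.support) hb)
  calc ∑ b ∈ v, b.1.prod u ≤ ∑ b ∈ elementsSupportedOn t s, b.1.prod u :=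
        Finset.sum_le_sum_of_subset_of_nonneg hv fun b _ _ => hprod b
    _ = ∏ p ∈ s, (1 + ∑ k ∈ t, u p k) := sum_elementsSupportedOn_prod ht hu0 s
    _ ≤ Real.exp (∑ p ∈ s, ∑ k ∈ t, u p k) := Real.prod_one_add_le_exp_sum _ hlocal
    _ ≤ Real.exp (∑' p, ∑ k ∈ t, u p k) :=
        Real.exp_le_exp.2 (hsummable.sum_le_tsum _ fun p _ => hlocal p)

theorem hasSum_prod_of_hasExponentsIn (ht : 0 ∉ t) (hu0 : ∀ p, u p 0 = 1)
    (hu : ∀ p k, 0 ≤ u p k) (hsummable : Summable fun p => ∑ k ∈ t, u p k) :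
    HasSum (fun b : {b : P →₀ ℕ // HasExponentsIn t b} => b.1.prod u)
      (∏' p, (1 + ∑ k ∈ t, u p k)) := by
  have hsum := (summable_prod_of_hasExponentsIn ht hu0 hu hsummable).hasSum
  have hprod := (Real.multipliable_one_add_of_summable hsummable).hasProd
  have hlim := Tendsto.comp hsum tendsto_elementsSupportedOn
  simp_rw [Function.comp_def, sum_elementsSupportedOn_prod ht hu0] at hlim
  rwa [tendsto_nhds_unique hlim hprod] at hsum

open Classical in
lemma tprod_one_add_eq_mul_tprod_ite {f : P → ℝ} (hf : Summable f) (hf0 : ∀ p, 0 ≤ f p) (q : P) :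
    ∏' p, (1 + f p) = (1 + f q) * ∏' p, (1 + if p = q then 0 else f p) := by
  have hfq : Summable fun p => if p = q then 0 else f p :=
    hf.of_nonneg_of_le (fun p => by split_ifs <;> simp [hf0])
      fun p => by split_ifs <;> simp [hf0]
  rw [← ((hasProd_ite_eq q (1 + f q)).mul
    (Real.multipliable_one_add_of_summable hfq).hasProd).tprod_eq]
  refine tprod_congr fun p => ?_
  by_cases hp : p = q <;> simp [hp]

-- Subtract from the full Euler product the one in which `q` is not allowed to occur.
open Classical in
theorem hasSum_ite_mem_support_of_hasExponentsIn (ht : 0 ∉ t) (hu0 : ∀ p, u p 0 = 1)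
    (hu : ∀ p k, 0 ≤ u p k) (hsummable : Summable fun p => ∑ k ∈ t, u p k) (q : P) :
    HasSum (fun b : {b : P →₀ ℕ // HasExponentsIn t b} =>
        if q ∈ b.1.support then b.1.prod u else 0)
      ((∏' p, (1 + ∑ k ∈ t, u p k)) * ((∑ k ∈ t, u q k) / (1 + ∑ k ∈ t, u q k))) := by
  set v : P → ℕ → ℝ := fun p k => if p = q ∧ k ≠ 0 then 0 else u p k
  have hv (p : P) : ∑ k ∈ t, v p k = if p = q then 0 else ∑ k ∈ t, u p k := by
    split_ifs with hp
    · exact Finset.sum_eq_zero fun k hk => if_pos ⟨hp, ne_of_mem_of_not_mem hk ht⟩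
    · exact Finset.sum_congr rfl fun k _ => if_neg fun h => hp h.1
  have hlocal (p : P) : 0 ≤ ∑ k ∈ t, u p k := Finset.sum_nonneg fun k _ => hu p k
  have hsummable_v : Summable fun p => ∑ k ∈ t, v p k := by
    refine hsummable.of_nonneg_of_le (fun p => ?_) fun p => ?_ <;> rw [hv] <;>
      split_ifs <;> simp [hlocal]
  have hdiff := (hasSum_prod_of_hasExponentsIn ht hu0 hu hsummable).sub
    (hasSum_prod_of_hasExponentsIn ht (fun p => by simp [v, hu0])
      (fun p k => by unfold v; split_ifs <;> simp [hu]) hsummable_v)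
  have hterm (b : {b : P →₀ ℕ // HasExponentsIn t b}) :
      (if q ∈ b.1.support then b.1.prod u else 0) = b.1.prod u - b.1.prod v := by
    split_ifs with hq
    · have hzero : b.1.prod v = 0 :=
        Finset.prod_eq_zero hq (if_pos ⟨rfl, Finsupp.mem_support_iff.1 hq⟩)
      rw [hzero, sub_zero]
    · refine (sub_eq_zero.2 (Finset.prod_congr rfl fun p hp => (if_neg ?_).symm)).symm
      rintro ⟨rfl, -⟩
      exact hq hp
  have hq : 1 + ∑ k ∈ t, u q k ≠ 0 := (add_pos_of_pos_of_nonneg one_pos (hlocal q)).ne'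
  have hvalue : (∏' p, (1 + ∑ k ∈ t, u p k)) * ((∑ k ∈ t, u q k) / (1 + ∑ k ∈ t, u q k)) =
      ∏' p, (1 + ∑ k ∈ t, u p k) - ∏' p, (1 + ∑ k ∈ t, v p k) := by
    simp_rw [hv]
    rw [tprod_one_add_eq_mul_tprod_ite hsummable hlocal q]
    field_simp
    ring
  simp_rw [hterm, hvalue]
  exact hdiff

end EulerProduct

section HFullDecomposition

/-- The part `b` in the unique decomposition `k = h * a + b` of an exponent `k = 0` or `k ≥ h`
with `b = 0` or `h < b < 2 * h`. -/
def hfullRemainder (h k : ℕ) : ℕ := if h ∣ k then 0 else h + k % h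

/-- The part `a` in the unique decomposition `k = h * a + b` of an exponent `k = 0` or `k ≥ h`
with `b = 0` or `h < b < 2 * h`. -/
def hfullQuotient (h k : ℕ) : ℕ := (k - hfullRemainder h k) / h

lemma hfullRemainder_zero (h : ℕ) : hfullRemainder h 0 = 0 := if_pos (dvd_zero h)

lemma hfullQuotient_zero (h : ℕ) : hfullQuotient h 0 = 0 := by simp [hfullQuotient]

variable {h : ℕ}

lemma hfullRemainder_mul_add (a : ℕ) {b : ℕ} (hb : b ∈ insert 0 (Finset.Ioo h (2 * h))) :
    hfullRemainder h (h * a + b) = b := by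
  rw [Finset.mem_insert, Finset.mem_Ioo] at hb
  obtain rfl | ⟨hlt, hlt'⟩ := hb
  · exact if_pos (Dvd.intro a rfl)
  · have hmod : b % h = b - h := by
      rw [Nat.mod_eq_sub_mod hlt.le, Nat.mod_eq_of_lt (by lia)]
    have hndvd : ¬ h ∣ h * a + b := by
      rw [Nat.dvd_add_right (Dvd.intro a rfl), Nat.dvd_iff_mod_eq_zero]
      lia
    rw [hfullRemainder, if_neg hndvd, Nat.mul_add_mod, hmod]
    lia

lemma hfullQuotient_mul_add (hh : h ≠ 0) (a : ℕ) {b : ℕ}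
    (hb : b ∈ insert 0 (Finset.Ioo h (2 * h))) : hfullQuotient h (h * a + b) = a := by
  rw [hfullQuotient, hfullRemainder_mul_add a hb, Nat.add_sub_cancel,
    Nat.mul_div_cancel_left a (Nat.pos_of_ne_zero hh)]

lemma mul_hfullQuotient_add_hfullRemainder {k : ℕ} (hk : k ≠ 0 → h ≤ k) :
    h * hfullQuotient h k + hfullRemainder h k = k := by
  rw [hfullQuotient, hfullRemainder]
  split_ifs with hdvd
  · exact Nat.mul_div_cancel' hdvd
  · have hle : h ≤ k := hk fun h0 => hdvd (h0 ▸ dvd_zero h)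
    have hmod : k % h ≤ k - h := by
      rw [Nat.mod_eq_sub_mod hle]
      exact Nat.mod_le _ _
    have hdvd' : h ∣ k - (h + k % h) := by
      rw [Nat.sub_add_eq, Nat.sub_right_comm]
      exact Nat.dvd_sub (Nat.dvd_sub_mod k) (dvd_refl h)
    rw [Nat.mul_div_cancel' hdvd']
    lia

lemma hfullRemainder_mem_Ioo (hh : h ≠ 0) {k : ℕ} (hk : hfullRemainder h k ≠ 0) :
    hfullRemainder h k ∈ Finset.Ioo h (2 * h) := by
  rw [hfullRemainder] at hk ⊢
  split_ifs at hk ⊢ with hdvd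
  · exact absurd rfl hk
  · have hpos : k % h ≠ 0 := mt Nat.dvd_of_mod_eq_zero hdvd
    have hlt := Nat.mod_lt k (Nat.pos_of_ne_zero hh)
    rw [Finset.mem_Ioo]
    lia

variable {P : Type*}

/-- Every nonzero exponent of `m` is at least `h`. -/
def IsHFull (h : ℕ) (m : P →₀ ℕ) : Prop := ∀ p ∈ m.support, h ≤ m p

lemma support_nsmul_add (hh : h ≠ 0) (a b : P →₀ ℕ) :
    (h • a + b).support = (a + b).support := by
  ext p
  simp [hh]

lemma isHFull_nsmul_add {a b : P →₀ ℕ} (hb : HasExponentsIn (Finset.Ioo h (2 * h)) b) :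
    IsHFull h (h • a + b) := by
  intro p hp
  obtain hb0 | hbI := Finset.mem_insert.1 (hb.apply_mem_insert_zero p)
  · rw [Finsupp.mem_support_iff, Finsupp.add_apply, Finsupp.smul_apply, hb0, add_zero,
      smul_eq_mul] at hp
    rw [Finsupp.add_apply, Finsupp.smul_apply, hb0, add_zero, smul_eq_mul]
    exact Nat.le_mul_of_pos_right h (Nat.pos_of_ne_zero (right_ne_zero_of_mul hp))
  · rw [Finsupp.add_apply]
    exact le_add_left (Finset.mem_Ioo.1 hbI).1.le

lemma hasExponentsIn_mapRange_hfullRemainder (hh : h ≠ 0) (m : P →₀ ℕ) :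
    HasExponentsIn (Finset.Ioo h (2 * h))
      (m.mapRange (hfullRemainder h) (hfullRemainder_zero h)) := fun p hp => by
  rw [Finsupp.mem_support_iff, Finsupp.mapRange_apply] at hp
  rw [Finsupp.mapRange_apply]
  exact hfullRemainder_mem_Ioo hh hp

lemma IsHFull.nsmul_mapRange_add_mapRange {m : P →₀ ℕ} (hm : IsHFull h m) :
    h • m.mapRange (hfullQuotient h) (hfullQuotient_zero h) +
      m.mapRange (hfullRemainder h) (hfullRemainder_zero h) = m := by
  ext p
  rw [Finsupp.add_apply, Finsupp.smul_apply, Finsupp.mapRange_apply, Finsupp.mapRange_apply]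
  exact mul_hfullQuotient_add_hfullRemainder fun hp => hm p (Finsupp.mem_support_iff.2 hp)

lemma mapRange_hfullRemainder_nsmul_add (a : P →₀ ℕ) {b : P →₀ ℕ}
    (hb : HasExponentsIn (Finset.Ioo h (2 * h)) b) :
    (h • a + b).mapRange (hfullRemainder h) (hfullRemainder_zero h) = b := by
  ext p
  exact hfullRemainder_mul_add (a p) (hb.apply_mem_insert_zero p)

lemma mapRange_hfullQuotient_nsmul_add (hh : h ≠ 0) (a : P →₀ ℕ) {b : P →₀ ℕ}
    (hb : HasExponentsIn (Finset.Ioo h (2 * h)) b) :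
    (h • a + b).mapRange (hfullQuotient h) (hfullQuotient_zero h) = a := by
  ext p
  exact hfullQuotient_mul_add hh (a p) (hb.apply_mem_insert_zero p)

end HFullDecomposition

namespace ArithmeticSemigroup

variable {P : Type*} (S : ArithmeticSemigroup P)

section HFullSum

variable {h : ℕ} {x : ℝ}

open Classical in
/-- The sum of `ω` over the `h`-full elements of norm at most `x`. -/
def hfullOmegaSum (h : ℕ) (x : ℝ) : ℝ :=
  ∑ m ∈ (S.elementsLE x).filter (IsHFull h), (m.support.card : ℝ)

/-- The largest norm of an `a` for which `h • a + b` has norm at most `x`. -/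
def cofactorBound (h : ℕ) (x : ℝ) (b : P →₀ ℕ) : ℝ := (x / S.norm b) ^ (1 / (h : ℝ))

lemma cofactorBound_pos (hx : 0 < x) (b : P →₀ ℕ) : 0 < S.cofactorBound h x b :=
  Real.rpow_pos_of_pos (div_pos hx (S.norm_pos b)) _

lemma cofactorBound_eq (hx : 0 ≤ x) (b : P →₀ ℕ) :
    S.cofactorBound h x b = x ^ (1 / (h : ℝ)) * S.norm b ^ (-(1 / (h : ℝ))) := by
  rw [cofactorBound, Real.div_rpow hx (S.norm_pos b).le, Real.rpow_neg (S.norm_pos b).le,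
    div_eq_mul_inv]

lemma log_cofactorBound (hx : 0 < x) (b : P →₀ ℕ) :
    Real.log (S.cofactorBound h x b) = (Real.log x - Real.log (S.norm b)) / h := by
  rw [cofactorBound, Real.log_rpow (div_pos hx (S.norm_pos b)),
    Real.log_div hx.ne' (S.norm_pos b).ne', one_div_mul_eq_div]

lemma norm_le_cofactorBound_iff (hh : h ≠ 0) (hx : 0 < x) (a b : P →₀ ℕ) :
    S.norm a ≤ S.cofactorBound h x b ↔ S.norm (h • a + b) ≤ x := by
  rw [cofactorBound, one_div, Real.le_rpow_inv_iff_of_pos (S.norm_pos a).le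
    (div_pos hx (S.norm_pos b)).le (by positivity), norm_add, norm_nsmul, Real.rpow_natCast,
    le_div_iff₀ (S.norm_pos b)]

lemma omegaSum_eq_sum_nsmul_add (hh : h ≠ 0) (b : P →₀ ℕ) (y : ℝ) :
    S.omegaSum b y = ∑ a ∈ S.elementsLE y, ((h • a + b).support.card : ℝ) :=
  Finset.sum_congr rfl fun a _ => by rw [support_nsmul_add hh]

lemma omegaSum_cofactorBound_eq_zero (hh : h ≠ 0) (hx : 0 < x) {b : P →₀ ℕ}
    (hb : x < S.norm b) : S.omegaSum b (S.cofactorBound h x b) = 0 := by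
  refine S.omegaSum_eq_zero b (Real.rpow_lt_one (div_pos hx (S.norm_pos b)).le ?_ (by positivity))
  exact (div_lt_one (S.norm_pos b)).2 hb

open Classical in
lemma hfullOmegaSum_eq_sum (hh : h ≠ 0) (hx : 0 < x) :
    S.hfullOmegaSum h x =
      ∑ b ∈ (S.elementsLE x).filter (HasExponentsIn (Finset.Ioo h (2 * h))),
        S.omegaSum b (S.cofactorBound h x b) := by
  have hmem {a b : P →₀ ℕ} :
      a ∈ S.elementsLE (S.cofactorBound h x b) ↔ S.norm (h • a + b) ≤ x := by
    rw [mem_elementsLE, S.norm_le_cofactorBound_iff hh hx]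
  simp_rw [S.omegaSum_eq_sum_nsmul_add hh]
  rw [Finset.sum_sigma', hfullOmegaSum]
  refine Finset.sum_bij'
    (fun m _ => ⟨m.mapRange (hfullRemainder h) (hfullRemainder_zero h),
      m.mapRange (hfullQuotient h) (hfullQuotient_zero h)⟩)
    (fun c _ => h • c.2 + c.1) (fun m hm => ?_) (fun c hc => ?_) (fun m hm => ?_)
    (fun c hc => ?_) (fun m hm => ?_)
  · obtain ⟨hmx, hm⟩ := Finset.mem_filter.1 hm
    rw [mem_elementsLE, ← hm.nsmul_mapRange_add_mapRange] at hmx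
    refine Finset.mem_sigma.2 ⟨Finset.mem_filter.2
      ⟨?_, hasExponentsIn_mapRange_hfullRemainder hh m⟩, hmem.2 hmx⟩
    rw [norm_add] at hmx
    exact S.mem_elementsLE.2
      ((le_mul_of_one_le_left (S.norm_pos _).le (S.one_le_norm _)).trans hmx)
  · obtain ⟨hb, ha⟩ := Finset.mem_sigma.1 hc
    exact Finset.mem_filter.2 ⟨S.mem_elementsLE.2 (hmem.1 ha),
      isHFull_nsmul_add (Finset.mem_filter.1 hb).2⟩
  · exact (Finset.mem_filter.1 hm).2.nsmul_mapRange_add_mapRange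
  · have hb := (Finset.mem_filter.1 (Finset.mem_sigma.1 hc).1).2
    exact Sigma.ext (mapRange_hfullRemainder_nsmul_add c.2 hb)
      (heq_of_eq (mapRange_hfullQuotient_nsmul_add hh c.2 hb))
  · rw [(Finset.mem_filter.1 hm).2.nsmul_mapRange_add_mapRange]

lemma hasSum_hfullOmegaSum (hh : h ≠ 0) (hx : 0 < x) :
    HasSum (fun b : {b : P →₀ ℕ // HasExponentsIn (Finset.Ioo h (2 * h)) b} =>
      S.omegaSum b.1 (S.cofactorBound h x b.1)) (S.hfullOmegaSum h x) := by
  classical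
  rw [S.hfullOmegaSum_eq_sum hh hx, ← Finset.sum_subtype_eq_sum_filter]
  refine hasSum_sum_of_ne_finset_zero fun b hb => ?_
  rw [Finset.mem_subtype, mem_elementsLE, not_le] at hb
  exact S.omegaSum_cofactorBound_eq_zero hh hx hb

end HFullSum

end ArithmeticSemigroup

section LogEstimates

lemma abs_log_one_sub_le {u : ℝ} (hu : 0 ≤ u) (hu2 : u ≤ 1 / 2) : |Real.log (1 - u)| ≤ 2 * u := by
  have hpos : 0 < 1 - u := by linarith
  rw [abs_of_nonpos (Real.log_nonpos hpos.le (by linarith))]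
  have hinv : (1 - u)⁻¹ ≤ 1 + 2 * u := by
    rw [inv_le_iff_one_le_mul₀ hpos]
    nlinarith
  linarith [Real.one_sub_inv_le_log_of_pos hpos]

lemma abs_log_sub_div_sub_le {l β c : ℝ} (hc : 0 < c) (hl : 0 < l) (hβ : 0 ≤ β)
    (hβl : β ≤ l / 2) :
    |Real.log ((l - β) / c) - (Real.log l - Real.log c)| ≤ 2 * (β / l) := by
  have hsub : l - β = l * (1 - β / l) := by field_simp
  have hquot : β / l ≤ 1 / 2 := by rw [div_le_iff₀ hl]; linarith
  have hne : 1 - β / l ≠ 0 := by linarith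
  rw [hsub, Real.log_div (mul_ne_zero hl.ne' hne) hc.ne', Real.log_mul hl.ne' hne]
  convert abs_log_one_sub_le (by positivity) hquot using 2
  ring

end LogEstimates

namespace ArithmeticSemigroup

variable {P : Type*} {S : ArithmeticSemigroup P} {κ θ C B A : ℝ} {h : ℕ}

section Cofactor

lemma AxiomA.exists_abs_omegaSum_cofactorBound_sub_le_of_log_le (hA : S.AxiomA κ θ C)
    (hB : S.ChebyshevBound B)
    (hMertens : Tendsto (fun x => S.primeInvSum x - Real.log (Real.log x)) atTop (𝓝 A))
    (hh : h ≠ 0) :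
    ∃ D, ∀ x, 1 < x → ∀ b, Real.log (S.norm b) ≤ Real.log x / 2 →
      |S.omegaSum b (S.cofactorBound h x b) - κ * S.cofactorBound h x b *
        (Real.log (Real.log x) - Real.log h + A + S.coprimeWeight b)| ≤
      D * (S.cofactorBound h x b / Real.log x) * (1 + Real.log (S.norm b)) ^ 2 := by
  obtain ⟨D, hD, hD'⟩ := hA.exists_abs_omegaSum_sub_le hB hMertens
  have hκ := hA.κ_pos
  have hh0 : (0 : ℝ) < h := by positivity
  refine ⟨2 * h * D + 2 * κ, fun x hx b hb => ?_⟩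
  have hx0 : 0 < x := one_pos.trans hx
  have hβ := S.log_norm_nonneg b
  have hypos := S.cofactorBound_pos (h := h) hx0 b
  have hlogy := S.log_cofactorBound (h := h) hx0 b
  set l := Real.log x
  set β := Real.log (S.norm b)
  set y := S.cofactorBound h x b
  have hl0 : 0 < l := Real.log_pos hx
  have hlogy_ge : l / (2 * h) ≤ Real.log y := by
    rw [hlogy, div_le_div_iff₀ (by positivity) hh0]
    nlinarith
  have hy1 : 1 < y := (Real.log_pos_iff hypos.le).1 (lt_of_lt_of_le (by positivity) hlogy_ge)
  have hdiv : y / Real.log y ≤ 2 * h * (y / l) := by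
    calc y / Real.log y ≤ y / (l / (2 * h)) := by gcongr
      _ = 2 * h * (y / l) := by field_simp
  have hloglog : |κ * y * (Real.log (Real.log y) - (Real.log l - Real.log h))| ≤
      κ * y * (2 * (β / l)) := by
    rw [abs_mul, abs_of_pos (by positivity), hlogy]
    exact mul_le_mul_of_nonneg_left (abs_log_sub_div_sub_le hh0 hl0 hβ hb) (by positivity)
  calc |S.omegaSum b y - κ * y * (Real.log l - Real.log h + A + S.coprimeWeight b)|
      = |(S.omegaSum b y - κ * y * (Real.log (Real.log y) + A + S.coprimeWeight b)) +
          κ * y * (Real.log (Real.log y) - (Real.log l - Real.log h))| := by ring_nf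
    _ ≤ D * (1 + β) * (2 * h * (y / l)) + κ * y * (2 * (β / l)) :=
        (abs_add_le _ _).trans (add_le_add ((hD' b y hy1).trans (by gcongr)) hloglog)
    _ = (2 * h * D * (1 + β) + 2 * κ * β) * (y / l) := by ring
    _ ≤ ((2 * h * D + 2 * κ) * (1 + β) ^ 2) * (y / l) := by
        gcongr
        have hself : 1 + β ≤ (1 + β) ^ 2 := by nlinarith
        have hself' : β ≤ (1 + β) ^ 2 := by linarith
        rw [add_mul]
        gcongr
    _ = (2 * h * D + 2 * κ) * (y / l) * (1 + β) ^ 2 := by ring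

lemma coprimeWeight_le_two_mul_log_norm (b : P →₀ ℕ) :
    S.coprimeWeight b ≤ 2 * Real.log (S.norm b) :=
  (S.coprimeWeight_le_card_support b).trans (S.card_support_le_two_mul_log_norm b)

lemma AxiomA.omegaSum_cofactorBound_le (hA : S.AxiomA κ θ C) (hh : h ≠ 0) {x : ℝ} (hx : 1 ≤ x)
    (b : P →₀ ℕ) :
    S.omegaSum b (S.cofactorBound h x b) ≤
      2 * (κ + C) * S.cofactorBound h x b * (Real.log x + Real.log (S.norm b)) := by
  have hx0 : 0 < x := one_pos.trans_le hx
  have hβ := S.log_norm_nonneg b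
  have hl := Real.log_nonneg hx
  have hypos := S.cofactorBound_pos (h := h) hx0 b
  have hcoeff : 0 ≤ 2 * (κ + C) * S.cofactorBound h x b :=
    mul_nonneg (mul_nonneg zero_le_two (add_nonneg hA.κ_pos.le hA.nonneg)) hypos.le
  obtain hy | hy := lt_or_ge (S.cofactorBound h x b) 1
  · rw [S.omegaSum_eq_zero b hy]
    positivity
  refine (hA.omegaSum_le b hy).trans (mul_le_mul_of_nonneg_left ?_ hcoeff)
  have hh1 : (1 : ℝ) ≤ h := Nat.one_le_cast.2 (Nat.one_le_iff_ne_zero.2 hh)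
  have hlogy : Real.log (S.cofactorBound h x b) ≤ Real.log x / h := by
    rw [S.log_cofactorBound hx0]
    gcongr
    linarith
  linarith [div_le_self hl hh1]

lemma AxiomA.abs_omegaSum_cofactorBound_sub_le_of_le_log (hA : S.AxiomA κ θ C) (hh : h ≠ 0)
    {x : ℝ} (hx : Real.exp 1 ≤ x) {b : P →₀ ℕ} (hb : Real.log x / 2 ≤ Real.log (S.norm b)) :
    |S.omegaSum b (S.cofactorBound h x b) - κ * S.cofactorBound h x b *
      (Real.log (Real.log x) - Real.log h + A + S.coprimeWeight b)| ≤
    (12 * (κ + C) + 8 * κ + 2 * κ * (Real.log h + |A|)) *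
      (S.cofactorBound h x b / Real.log x) * (1 + Real.log (S.norm b)) ^ 2 := by
  have hκ := hA.κ_pos
  have hC := hA.nonneg
  have hx0 : 0 < x := (Real.exp_pos 1).trans_le hx
  have hx1 : 1 ≤ x := (Real.one_le_exp zero_le_one).trans hx
  have hl1 : 1 ≤ Real.log x := (Real.le_log_iff_exp_le hx0).2 hx
  have hypos := S.cofactorBound_pos (h := h) hx0 b
  have homega := hA.omegaSum_cofactorBound_le hh hx1 b
  have homega0 := S.omegaSum_nonneg b (S.cofactorBound h x b)
  have hweight := S.coprimeWeight_nonneg b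
  have hweight' := S.coprimeWeight_le_two_mul_log_norm b
  have hlogh := Real.log_natCast_nonneg h
  set l := Real.log x
  set β := Real.log (S.norm b)
  set y := S.cofactorBound h x b
  set M := Real.log h + |A|
  have hβ : 0 < β := by linarith
  have hmain : |Real.log l - Real.log h + A + S.coprimeWeight b| ≤ 4 * β + M := by
    have hloglog := Real.log_nonneg hl1
    have hloglog' := Real.log_le_sub_one_of_pos (one_pos.trans_le hl1)
    rw [abs_le]
    constructor <;> linarith [neg_abs_le A, le_abs_self A]
  calc |S.omegaSum b y - κ * y * (Real.log l - Real.log h + A + S.coprimeWeight b)|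
      ≤ 2 * (κ + C) * y * (2 * β + β) + κ * y * (4 * β + M) := by
        refine (abs_sub _ _).trans (add_le_add ?_ ?_)
        · rw [abs_of_nonneg homega0]
          exact homega.trans (by gcongr; linarith)
        · rw [abs_mul, abs_of_pos (by positivity)]
          gcongr
    _ ≤ (6 * (κ + C) + 4 * κ + κ * M) * (1 + β) * y := by
        have hrest : 0 ≤ (6 * (κ + C) + 4 * κ + κ * M * β) * y := by positivity
        linarith
    _ ≤ (6 * (κ + C) + 4 * κ + κ * M) * (1 + β) * y * (2 * (1 + β) / l) :=
        le_mul_of_one_le_right (by positivity) ((one_le_div₀ (by positivity)).2 (by linarith))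
    _ = (12 * (κ + C) + 8 * κ + 2 * κ * M) * (y / l) * (1 + β) ^ 2 := by ring

theorem AxiomA.exists_abs_omegaSum_cofactorBound_sub_le (hA : S.AxiomA κ θ C)
    (hB : S.ChebyshevBound B)
    (hMertens : Tendsto (fun x => S.primeInvSum x - Real.log (Real.log x)) atTop (𝓝 A))
    (hh : h ≠ 0) :
    ∃ D, ∀ x, Real.exp 1 ≤ x → ∀ b,
      |S.omegaSum b (S.cofactorBound h x b) - κ * S.cofactorBound h x b *
        (Real.log (Real.log x) - Real.log h + A + S.coprimeWeight b)| ≤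
      D * (S.cofactorBound h x b / Real.log x) * (1 + Real.log (S.norm b)) ^ 2 := by
  obtain ⟨D, hD⟩ := hA.exists_abs_omegaSum_cofactorBound_sub_le_of_log_le hB hMertens hh
  refine ⟨max D (12 * (κ + C) + 8 * κ + 2 * κ * (Real.log h + |A|)), fun x hx b => ?_⟩
  have hx1 : 1 < x := (Real.one_lt_exp_iff.2 one_pos).trans_le hx
  have hfactor : 0 ≤ S.cofactorBound h x b / Real.log x :=
    (div_pos (S.cofactorBound_pos (one_pos.trans hx1) b) (Real.log_pos hx1)).le
  obtain hb | hb := le_total (Real.log (S.norm b)) (Real.log x / 2)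
  · refine (hD x hx1 b hb).trans ?_
    gcongr
    exact le_max_left _ _
  · refine (hA.abs_omegaSum_cofactorBound_sub_le_of_le_log hh hx hb).trans ?_
    gcongr
    exact le_max_right _ _

end Cofactor

end ArithmeticSemigroup

section LocalFactors

lemma sum_Ioo_inv_pow {q : ℝ} (hq : 1 < q) {h : ℕ} (hh : h ≠ 0) :
    ∑ k ∈ Finset.Ioo h (2 * h), (q ^ k)⁻¹ = (q ^ h - q) / ((q ^ h) ^ 2 * (q - 1)) := by
  have hq0 : q ≠ 0 := (one_pos.trans hq).ne'
  have hsub : q - 1 ≠ 0 := sub_ne_zero.2 hq.ne'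
  have hsub' : 1 - q ≠ 0 := sub_ne_zero.2 hq.ne
  have hIco : Finset.Ioo h (2 * h) = Finset.Ico (h + 1) (2 * h) := by
    ext k
    simp
  simp_rw [hIco, ← inv_pow]
  rw [geom_sum_Ico (inv_ne_one.2 hq.ne') (by lia), two_mul, pow_add, pow_add, pow_one, inv_pow,
    show q⁻¹ - 1 = (1 - q) / q by field_simp]
  field_simp
  ring

lemma one_sub_inv_mul_div_one_add {N q : ℝ} (hq : 1 < q) (hqN : q ≤ N) :
    (1 - N⁻¹) * ((N - q) / (N ^ 2 * (q - 1)) / (1 + (N - q) / (N ^ 2 * (q - 1)))) =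
      1 / (q * (N - N / q + 1)) - 1 / (N * (N - N / q + 1)) := by
  have hq0 : 0 < q := one_pos.trans hq
  have hN0 : 0 < N := hq0.trans_le hqN
  have hq1 : q - 1 ≠ 0 := sub_ne_zero.2 hq.ne'
  have hN1 : N - 1 ≠ 0 := sub_ne_zero.2 (hq.trans_le hqN).ne'
  have : q * N - N + q ≠ 0 := by nlinarith
  have hfactor : 1 + (N - q) / (N ^ 2 * (q - 1)) =
      (N - 1) * (q * N - N + q) / (N ^ 2 * (q - 1)) := by
    field_simp
    ring
  have hdiv : N - N / q + 1 = (q * N - N + q) / q := by field_simp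
  rw [hfactor, div_div_div_cancel_right₀ (by positivity), hdiv]
  field_simp

lemma one_lt_one_div_mul_add_one {h : ℕ} (hh : h ≠ 0) : 1 < 1 / (h : ℝ) * (h + 1) := by
  rw [one_div_mul_eq_div, one_lt_div₀ (by positivity)]
  linarith

lemma rpow_neg_mul_one_add_log_sq_le {z ε s : ℝ} (hz : 1 ≤ z) (hε : 0 < ε) :
    z ^ (-s) * (1 + Real.log z) ^ 2 ≤ (1 + 1 / ε) ^ 2 * z ^ (-(s - 2 * ε)) := by
  have hz0 : 0 < z := one_pos.trans_le hz
  have hlog0 := Real.log_nonneg hz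
  have hlog : 1 + Real.log z ≤ (1 + 1 / ε) * z ^ ε := by
    rw [add_mul, one_mul, one_div_mul_eq_div]
    exact add_le_add (Real.one_le_rpow hz hε.le) (Real.log_le_rpow_div hz0.le hε)
  calc z ^ (-s) * (1 + Real.log z) ^ 2 ≤ z ^ (-s) * ((1 + 1 / ε) * z ^ ε) ^ 2 := by gcongr
    _ = (1 + 1 / ε) ^ 2 * (z ^ (-s) * (z ^ ε * z ^ ε)) := by ring
    _ = (1 + 1 / ε) ^ 2 * z ^ (-(s - 2 * ε)) := by
        rw [← Real.rpow_add hz0, ← Real.rpow_add hz0]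
        ring_nf

end LocalFactors

namespace ArithmeticSemigroup

variable {P : Type*} (S : ArithmeticSemigroup P) {h : ℕ} {B : ℝ}

section HFullEulerProduct

/-- The local factor at `p`, without its constant term `1`, of the Dirichlet series of
`norm b ^ (-s)` over the `b` whose exponents lie strictly between `h` and `2 * h`. -/
def hfullLocalSum (h : ℕ) (s : ℝ) (p : P) : ℝ :=
  ∑ k ∈ Finset.Ioo h (2 * h), S.primeNorm p ^ (-(s * k))

/-- The constant `γ_h`. -/
def hfullDensity (h : ℕ) : ℝ :=
  ∏' p : P, (1 + (S.primeNorm p - S.primeNorm p ^ (1 / (h : ℝ))) /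
    (S.primeNorm p ^ 2 * (S.primeNorm p ^ (1 / (h : ℝ)) - 1)))

/-- The term at `p` of the series `𝔏_h(r)`. -/
def hfullSeriesTerm (h : ℕ) (r : ℝ) (p : P) : ℝ :=
  1 / (S.primeNorm p ^ (r / (h : ℝ) - 1) *
    (S.primeNorm p - S.primeNorm p ^ (1 - 1 / (h : ℝ)) + 1))

/-- The series `𝔏_h(r)`. -/
def hfullSeries (h : ℕ) (r : ℝ) : ℝ := ∑' p, S.hfullSeriesTerm h r p

lemma prod_primeNorm_rpow (s : ℝ) (b : P →₀ ℕ) :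
    (b.prod fun p k => S.primeNorm p ^ (-(s * k))) = S.norm b ^ (-s) := by
  rw [norm, Finsupp.prod, Finsupp.prod,
    ← Real.finsetProd_rpow _ _ fun p _ => pow_nonneg (S.primeNorm_pos p).le _]
  refine Finset.prod_congr rfl fun p _ => ?_
  rw [← Real.rpow_natCast, ← Real.rpow_mul (S.primeNorm_pos p).le]
  ring_nf

lemma hfullLocalSum_one_div (hh : h ≠ 0) (p : P) :
    S.hfullLocalSum h (1 / (h : ℝ)) p =
      (S.primeNorm p - S.primeNorm p ^ (1 / (h : ℝ))) /
        (S.primeNorm p ^ 2 * (S.primeNorm p ^ (1 / (h : ℝ)) - 1)) := by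
  have hN := S.primeNorm_pos p
  have hroot : (S.primeNorm p ^ (1 / (h : ℝ))) ^ h = S.primeNorm p := by
    rw [one_div, Real.rpow_inv_natCast_pow hN.le hh]
  have hlocal (k : ℕ) : S.primeNorm p ^ (-(1 / (h : ℝ) * k)) =
      ((S.primeNorm p ^ (1 / (h : ℝ))) ^ k)⁻¹ := by
    rw [Real.rpow_neg hN.le, Real.rpow_mul hN.le, Real.rpow_natCast]
  simp_rw [hfullLocalSum, hlocal]
  rw [sum_Ioo_inv_pow (Real.one_lt_rpow (S.one_lt_primeNorm p) (by positivity)) hh, hroot]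

lemma tprod_one_add_hfullLocalSum (hh : h ≠ 0) :
    ∏' p, (1 + S.hfullLocalSum h (1 / (h : ℝ)) p) = S.hfullDensity h :=
  tprod_congr fun p => by rw [S.hfullLocalSum_one_div hh]

variable {S}

lemma ChebyshevBound.summable_rpow_neg (hB : S.ChebyshevBound B) {σ : ℝ} (hσ : 1 < σ) :
    Summable fun p => S.primeNorm p ^ (-σ) := by
  refine Summable.of_nonneg_of_le (fun p => Real.rpow_nonneg (S.primeNorm_pos p).le _)
    (fun p => ?_) ((hB.summable_log_mul_rpow_neg hσ).mul_left 2)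
  have hpow : 0 ≤ S.primeNorm p ^ (-σ) := Real.rpow_nonneg (S.primeNorm_pos p).le _
  linarith [mul_le_mul_of_nonneg_right (S.one_half_le_log_primeNorm p) hpow]

lemma ChebyshevBound.summable_hfullLocalSum (hB : S.ChebyshevBound B) {s : ℝ} (hs0 : 0 ≤ s)
    (hs : 1 < s * (h + 1)) : Summable (S.hfullLocalSum h s) := by
  refine summable_sum fun k hk => hB.summable_rpow_neg (hs.trans_le ?_)
  gcongr
  exact_mod_cast (Finset.mem_Ioo.1 hk).1

lemma ChebyshevBound.hasSum_norm_rpow_neg (hB : S.ChebyshevBound B) {s : ℝ} (hs0 : 0 ≤ s)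
    (hs : 1 < s * (h + 1)) :
    HasSum (fun b : {b : P →₀ ℕ // HasExponentsIn (Finset.Ioo h (2 * h)) b} => S.norm b.1 ^ (-s))
      (∏' p, (1 + S.hfullLocalSum h s p)) := by
  simp_rw [← S.prod_primeNorm_rpow]
  exact hasSum_prod_of_hasExponentsIn (by simp) (fun p => by simp)
    (fun p k => Real.rpow_nonneg (S.primeNorm_pos p).le _) (hB.summable_hfullLocalSum hs0 hs)

open Classical in
lemma ChebyshevBound.hasSum_ite_norm_rpow_neg (hB : S.ChebyshevBound B) {s : ℝ} (hs0 : 0 ≤ s)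
    (hs : 1 < s * (h + 1)) (q : P) :
    HasSum (fun b : {b : P →₀ ℕ // HasExponentsIn (Finset.Ioo h (2 * h)) b} =>
        if q ∈ b.1.support then S.norm b.1 ^ (-s) else 0)
      ((∏' p, (1 + S.hfullLocalSum h s p)) *
        (S.hfullLocalSum h s q / (1 + S.hfullLocalSum h s q))) := by
  simp_rw [← S.prod_primeNorm_rpow]
  exact hasSum_ite_mem_support_of_hasExponentsIn (by simp) (fun p => by simp)
    (fun p k => Real.rpow_nonneg (S.primeNorm_pos p).le _) (hB.summable_hfullLocalSum hs0 hs) q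

variable (S)

lemma exists_mul_primeNorm_le (hh : h ≠ 0) :
    ∃ c > 0, ∀ p, c * S.primeNorm p ≤ S.primeNorm p - S.primeNorm p ^ (1 - 1 / (h : ℝ)) + 1 := by
  have hs : -(1 / (h : ℝ)) < 0 := neg_lt_zero.2 (by positivity)
  refine ⟨1 - 2 ^ (-(1 / (h : ℝ))),
    sub_pos.2 (Real.rpow_lt_one_of_one_lt_of_neg one_lt_two hs), fun p => ?_⟩
  have hN := S.primeNorm_pos p
  have hpow : S.primeNorm p ^ (-(1 / (h : ℝ))) ≤ 2 ^ (-(1 / (h : ℝ))) :=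
    Real.rpow_le_rpow_of_nonpos two_pos (S.two_le_primeNorm p) hs.le
  rw [sub_eq_add_neg 1 (1 / (h : ℝ)), Real.rpow_add hN, Real.rpow_one]
  linarith [mul_le_mul_of_nonneg_left hpow hN.le]

variable {S}

lemma ChebyshevBound.summable_hfullSeriesTerm (hB : S.ChebyshevBound B) (hh : h ≠ 0) {r : ℝ}
    (hr : h < r) : Summable (S.hfullSeriesTerm h r) := by
  obtain ⟨c, hc, hcN⟩ := S.exists_mul_primeNorm_le hh
  have hσ : 1 < r / h := (one_lt_div₀ (by positivity)).2 hr
  have hcpos (p : P) : 0 < c * S.primeNorm p := mul_pos hc (S.primeNorm_pos p)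
  have hpow (p : P) : 0 < S.primeNorm p ^ (r / (h : ℝ) - 1) :=
    Real.rpow_pos_of_pos (S.primeNorm_pos p) _
  refine Summable.of_nonneg_of_le (fun p => ?_) (fun p => ?_)
    ((hB.summable_rpow_neg hσ).mul_left (1 / c))
  · exact one_div_nonneg.2 (mul_pos (hpow p) ((hcpos p).trans_le (hcN p))).le
  · have hN := S.primeNorm_pos p
    have hexp : S.primeNorm p ^ (r / (h : ℝ)) =
        S.primeNorm p ^ (r / (h : ℝ) - 1) * S.primeNorm p := by
      rw [Real.rpow_sub_one hN.ne', div_mul_cancel₀ _ hN.ne']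
    calc S.hfullSeriesTerm h r p
        ≤ 1 / (S.primeNorm p ^ (r / (h : ℝ) - 1) * (c * S.primeNorm p)) :=
          one_div_le_one_div_of_le (mul_pos (hpow p) (hcpos p))
            (mul_le_mul_of_nonneg_left (hcN p) (hpow p).le)
      _ = 1 / c * S.primeNorm p ^ (-(r / (h : ℝ))) := by
          rw [Real.rpow_neg hN.le, hexp]
          field_simp

lemma one_sub_inv_mul_hfullLocalSum_div (hh : h ≠ 0) (p : P) :
    (1 - (S.primeNorm p)⁻¹) * (S.hfullLocalSum h (1 / (h : ℝ)) p /
        (1 + S.hfullLocalSum h (1 / (h : ℝ)) p)) =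
      S.hfullSeriesTerm h (h + 1) p - S.hfullSeriesTerm h (2 * h) p := by
  have hh1 : 1 ≤ (h : ℝ) := Nat.one_le_cast.2 (Nat.one_le_iff_ne_zero.2 hh)
  have hN := S.primeNorm_pos p
  have hexp : ((h : ℝ) + 1) / h - 1 = 1 / h := by field_simp; ring
  have hexp' : 2 * (h : ℝ) / h - 1 = 1 := by field_simp; ring
  rw [S.hfullLocalSum_one_div hh, one_sub_inv_mul_div_one_add
    (Real.one_lt_rpow (S.one_lt_primeNorm p) (by positivity))
    (Real.rpow_le_self_of_one_le (S.one_lt_primeNorm p).le (div_le_one_of_le₀ hh1 (by positivity))),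
    hfullSeriesTerm, hfullSeriesTerm, hexp, hexp', Real.rpow_sub hN, Real.rpow_one]

open Classical in
/-- Expand `coprimeWeight b` over the primes of `b` and sum over `b` first. -/
lemma ChebyshevBound.hasSum_coprimeWeight_mul_norm_rpow_neg (hB : S.ChebyshevBound B)
    (hh : h ≠ 0) :
    HasSum (fun b : {b : P →₀ ℕ // HasExponentsIn (Finset.Ioo h (2 * h)) b} =>
        S.coprimeWeight b.1 * S.norm b.1 ^ (-(1 / (h : ℝ))))
      (S.hfullDensity h * (S.hfullSeries h (h + 1) - S.hfullSeries h (2 * h))) := by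
  set F : P × {b : P →₀ ℕ // HasExponentsIn (Finset.Ioo h (2 * h)) b} → ℝ := fun c =>
    (1 - (S.primeNorm c.1)⁻¹) * if c.1 ∈ c.2.1.support then S.norm c.2.1 ^ (-(1 / (h : ℝ))) else 0
  have hF0 : 0 ≤ F := fun c => by
    refine mul_nonneg (sub_nonneg.2 (inv_le_one_of_one_le₀ (S.one_lt_primeNorm c.1).le)) ?_
    split_ifs
    exacts [Real.rpow_nonneg (S.norm_pos _).le _, le_rfl]
  have hrow (p : P) : HasSum (fun b => F (p, b))
      (S.hfullDensity h * (S.hfullSeriesTerm h (h + 1) p - S.hfullSeriesTerm h (2 * h) p)) := by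
    rw [← S.one_sub_inv_mul_hfullLocalSum_div hh, ← S.tprod_one_add_hfullLocalSum hh,
      mul_left_comm]
    exact (hB.hasSum_ite_norm_rpow_neg (by positivity) (one_lt_one_div_mul_add_one hh) p).mul_left _
  have hh0 : (0 : ℝ) < h := by positivity
  have hcol := ((hB.summable_hfullSeriesTerm hh (lt_add_one (h : ℝ))).hasSum.sub
    (hB.summable_hfullSeriesTerm hh (by linarith : (h : ℝ) < 2 * h)).hasSum).mul_left
      (S.hfullDensity h)
  have hF : Summable F := by
    refine (summable_prod_of_nonneg hF0).2 ⟨fun p => (hrow p).summable, ?_⟩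
    simp_rw [fun p => (hrow p).tsum_eq]
    exact hcol.summable
  have htotal : HasSum F
      (S.hfullDensity h * (S.hfullSeries h (h + 1) - S.hfullSeries h (2 * h))) := by
    convert hF.hasSum using 1
    rw [hF.tsum_prod, tsum_congr fun p => (hrow p).tsum_eq]
    exact hcol.tsum_eq.symm
  refine ((Equiv.prodComm _ P).hasSum_iff.2 htotal).prod_fiberwise fun b => ?_
  have hfiber : S.coprimeWeight b.1 * S.norm b.1 ^ (-(1 / (h : ℝ))) =
      ∑ p ∈ b.1.support, F (p, b) := by
    rw [coprimeWeight, Finset.sum_mul]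
    exact Finset.sum_congr rfl fun p hp => by simp only [F, if_pos hp]
  rw [hfiber]
  exact hasSum_sum_of_ne_finset_zero fun p hp =>
    (congrArg _ (if_neg hp)).trans (mul_zero _)

lemma ChebyshevBound.summable_norm_rpow_neg_mul_one_add_log_sq (hB : S.ChebyshevBound B)
    (hh : h ≠ 0) :
    Summable fun b : {b : P →₀ ℕ // HasExponentsIn (Finset.Ioo h (2 * h)) b} =>
      S.norm b.1 ^ (-(1 / (h : ℝ))) * (1 + Real.log (S.norm b.1)) ^ 2 := by
  set ε : ℝ := 1 / (4 * h * (h + 1)) with hε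
  have hε0 : 0 < ε := by positivity
  have hs : 1 / (h : ℝ) - 2 * ε = (2 * h + 1) / (2 * h * (h + 1)) := by
    rw [hε]
    field_simp
    ring
  have hs0 : 0 ≤ 1 / (h : ℝ) - 2 * ε := by rw [hs]; positivity
  have hs1 : 1 < (1 / (h : ℝ) - 2 * ε) * (h + 1) := by
    rw [hs, div_mul_eq_mul_div, mul_div_mul_right _ _ (by positivity), one_lt_div₀ (by positivity)]
    linarith
  refine Summable.of_nonneg_of_le (fun b => ?_)
    (fun b => rpow_neg_mul_one_add_log_sq_le (S.one_le_norm b.1) hε0)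
    ((hB.hasSum_norm_rpow_neg hs0 hs1).summable.mul_left _)
  exact mul_nonneg (Real.rpow_nonneg (S.norm_pos _).le _) (sq_nonneg _)

end HFullEulerProduct

section FirstMoment

variable {S} {κ θ C A : ℝ}

theorem AxiomA.hfullOmegaSum_sub_isBigO (hA : S.AxiomA κ θ C) (hB : S.ChebyshevBound B)
    (hMertens : Tendsto (fun x => S.primeInvSum x - Real.log (Real.log x)) atTop (𝓝 A))
    (hh : h ≠ 0) :
    (fun x => S.hfullOmegaSum h x
        - κ * S.hfullDensity h * (x ^ (1 / (h : ℝ)) * Real.log (Real.log x))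
        - κ * S.hfullDensity h * (A - Real.log h + S.hfullSeries h (h + 1)
          - S.hfullSeries h (2 * h)) * x ^ (1 / (h : ℝ)))
      =O[atTop] fun x => x ^ (1 / (h : ℝ)) / Real.log x := by
  obtain ⟨D, hD⟩ := hA.exists_abs_omegaSum_cofactorBound_sub_le hB hMertens hh
  have hdensity := hB.hasSum_norm_rpow_neg (by positivity) (one_lt_one_div_mul_add_one hh)
  rw [S.tprod_one_add_hfullLocalSum hh] at hdensity
  have hweight := hB.hasSum_coprimeWeight_mul_norm_rpow_neg hh
  have herror := (hB.summable_norm_rpow_neg_mul_one_add_log_sq hh).hasSum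
  set E := ∑' b : {b : P →₀ ℕ // HasExponentsIn (Finset.Ioo h (2 * h)) b},
    S.norm b.1 ^ (-(1 / (h : ℝ))) * (1 + Real.log (S.norm b.1)) ^ 2
  refine IsBigO.of_bound (D * E) ((eventually_ge_atTop (Real.exp 1)).mono fun x hx => ?_)
  have hx0 : 0 < x := (Real.exp_pos 1).trans_le hx
  have hl : 0 ≤ Real.log x := Real.log_nonneg ((Real.one_le_exp zero_le_one).trans hx)
  set X := x ^ (1 / (h : ℝ)) with hX
  have hX0 : 0 ≤ X := Real.rpow_nonneg hx0.le _
  set M := Real.log (Real.log x) - Real.log h + A with hM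
  have hdiff := (S.hasSum_hfullOmegaSum hh hx0).sub
    ((hdensity.mul_left (κ * X * M)).add (hweight.mul_left (κ * X)))
  have hbound := hdiff.norm_le_of_bounded (herror.mul_left (D * (X / Real.log x))) fun b => by
    have hb := hD x hx b.1
    rw [S.cofactorBound_eq hx0.le b.1, ← hX, ← hM] at hb
    rw [S.cofactorBound_eq hx0.le b.1, ← hX, Real.norm_eq_abs]
    convert hb using 1
    · congr 1
      ring
    · ring
  rw [Real.norm_of_nonneg (div_nonneg hX0 hl)]
  convert hbound using 1
  · rw [hM]
    congr 1
    ring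
  · ring

end FirstMoment

end ArithmeticSemigroup

section IdealSemigroup

open Module nonZeroDivisors

variable {K : Type*} [Field K] [NumberField K]

/-- The nonzero prime ideals of `𝓞 K`, indexing the exponents of an ideal factorization. -/
abbrev NonzeroPrime (K : Type*) [Field K] [NumberField K] : Type _ :=
  {p : Ideal (𝓞 K) // p.IsPrime ∧ p ≠ ⊥}

lemma NonzeroPrime.prime (p : NonzeroPrime K) : Prime p.1 := Ideal.prime_of_isPrime p.2.2 p.2.1

/-- The nonzero ideal with a given family of prime exponents. -/
def idealOfExponents (f : NonzeroPrime K →₀ ℕ) : Ideal (𝓞 K) := f.prod fun p k => p.1 ^ k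

lemma idealOfExponents_ne_bot (f : NonzeroPrime K →₀ ℕ) : idealOfExponents f ≠ ⊥ :=
  Finset.prod_ne_zero_iff.2 fun p _ => pow_ne_zero _ p.prime.ne_zero

lemma NonzeroPrime.emultiplicity_pow_of_ne {p q : NonzeroPrime K} (h : q ≠ p) (k : ℕ) :
    emultiplicity p.1 (q.1 ^ k) = 0 := by
  refine emultiplicity_eq_zero.2 fun hdvd => h (Subtype.ext ?_)
  have hassoc := (p.prime.dvd_prime_iff_associated q.prime).1 (p.prime.dvd_of_dvd_pow hdvd)
  exact (associated_iff_eq.1 hassoc).symm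

lemma emultiplicity_idealOfExponents (f : NonzeroPrime K →₀ ℕ) (p : NonzeroPrime K) :
    emultiplicity p.1 (idealOfExponents f) = f p := by
  rw [idealOfExponents, Finsupp.prod, Finset.emultiplicity_prod p.prime,
    Finset.sum_eq_single p (fun q _ hq => NonzeroPrime.emultiplicity_pow_of_ne hq _) fun hp => by
      rw [Finsupp.notMem_support_iff.1 hp, pow_zero, emultiplicity_of_one_right p.prime.not_isUnit],
    emultiplicity_pow_self p.prime.ne_zero p.prime.not_isUnit]

lemma pow_dvd_idealOfExponents {f : NonzeroPrime K →₀ ℕ} {p : NonzeroPrime K} {k : ℕ} :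
    p.1 ^ k ∣ idealOfExponents f ↔ k ≤ f p := by
  rw [pow_dvd_iff_le_emultiplicity, emultiplicity_idealOfExponents, Nat.cast_le]

lemma dvd_idealOfExponents {f : NonzeroPrime K →₀ ℕ} {p : NonzeroPrime K} :
    p.1 ∣ idealOfExponents f ↔ p ∈ f.support := by
  rw [← pow_one p.1, pow_dvd_idealOfExponents, Nat.one_le_iff_ne_zero, Finsupp.mem_support_iff]

lemma idealOfExponents_injective : Function.Injective (idealOfExponents (K := K)) := by
  intro f g hfg
  ext p
  have hf := emultiplicity_idealOfExponents f p
  rw [hfg, emultiplicity_idealOfExponents g p] at hf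
  exact_mod_cast hf.symm

lemma exists_idealOfExponents_eq (I : Ideal (𝓞 K)) : I ≠ ⊥ → ∃ f, idealOfExponents f = I := by
  refine UniqueFactorizationMonoid.induction_on_prime I (fun h => absurd rfl h) ?_ ?_
  · exact fun J hJ _ => ⟨0, Finsupp.prod_zero_index.trans (isUnit_iff_eq_one.1 hJ).symm⟩
  · intro J p hJ hp ih _
    obtain ⟨f, rfl⟩ := ih hJ
    let q : NonzeroPrime K := ⟨p, Ideal.isPrime_of_prime hp, hp.ne_zero⟩
    have hsingle : idealOfExponents (Finsupp.single q 1) = p := by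
      simp [idealOfExponents, q]
    refine ⟨Finsupp.single q 1 + f, (Finsupp.prod_add_index' (fun _ => pow_zero _)
      fun _ _ _ => pow_add _ _ _).trans ?_⟩
    exact congrArg (· * idealOfExponents f) hsingle

lemma absNorm_idealOfExponents (f : NonzeroPrime K →₀ ℕ) :
    (Ideal.absNorm (idealOfExponents f) : ℝ) =
      f.prod fun p k => (Ideal.absNorm p.1 : ℝ) ^ k := by
  simp only [idealOfExponents, Finsupp.prod, map_prod, map_pow, Nat.cast_prod, Nat.cast_pow]

lemma omegaK_idealOfExponents (f : NonzeroPrime K →₀ ℕ) :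
    omegaK (idealOfExponents f) = f.support.card := by
  rw [← Finset.card_map (Function.Embedding.subtype _), ← Set.ncard_coe_finset, omegaK]
  congr 1
  ext p
  simp only [Set.mem_ofPred_eq, Finset.coe_map, Set.mem_image, Finset.mem_coe,
    Function.Embedding.subtype_apply]
  constructor
  · rintro ⟨hp, hp0, hdvd⟩
    exact ⟨⟨p, hp, hp0⟩, dvd_idealOfExponents.1 hdvd, rfl⟩
  · rintro ⟨q, hq, rfl⟩
    exact ⟨q.2.1, q.2.2, dvd_idealOfExponents.2 hq⟩

lemma hFullI_idealOfExponents {h : ℕ} {f : NonzeroPrime K →₀ ℕ} :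
    HFullI h (idealOfExponents f) ↔ IsHFull h f := by
  refine ⟨fun hfull p hp => ?_, fun hfull p hp hp0 hdvd => ?_⟩
  · exact pow_dvd_idealOfExponents.1 (hfull p.1 p.2.1 p.2.2 (dvd_idealOfExponents.2 hp))
  · exact (pow_dvd_idealOfExponents (p := ⟨p, hp, hp0⟩)).2
      (hfull _ (dvd_idealOfExponents.1 hdvd))

/-- Unique factorization: exponent families correspond to nonzero ideals. -/
def exponentsEquivIdeal : (NonzeroPrime K →₀ ℕ) ≃ (Ideal (𝓞 K))⁰ :=
  Equiv.ofBijective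
    (fun f => ⟨idealOfExponents f, mem_nonZeroDivisors_of_ne_zero (idealOfExponents_ne_bot f)⟩)
    ⟨fun _ _ h => idealOfExponents_injective (congrArg Subtype.val h), fun I =>
      (exists_idealOfExponents_eq I.1 (nonZeroDivisors.ne_zero I.2)).imp fun _ => Subtype.ext⟩

/-- The restriction of `exponentsEquivIdeal` to the elements of norm at most `x`. -/
def exponentsEquivIdealsNormLE (x : ℝ) :
    {f : NonzeroPrime K →₀ ℕ | (f.prod fun p k => (Ideal.absNorm p.1 : ℝ) ^ k) ≤ x} ≃
      idealsNormLE K x :=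
  exponentsEquivIdeal.subtypeEquiv fun f => by
    change _ ↔ (Ideal.absNorm (idealOfExponents f) : ℝ) ≤ x
    rw [absNorm_idealOfExponents]
    rfl

lemma NonzeroPrime.two_le_absNorm (p : NonzeroPrime K) : 2 ≤ Ideal.absNorm p.1 := by
  have hne_zero : Ideal.absNorm p.1 ≠ 0 := Ideal.absNorm_eq_zero_iff.not.2 p.2.2
  have hne_one : Ideal.absNorm p.1 ≠ 1 := Ideal.absNorm_eq_one_iff.not.2 p.2.1.ne_top
  lia

variable (K) in
/-- The nonzero ideals of `𝓞 K`, encoded by their prime exponents, with the absolute norm. -/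
def idealSemigroup : ArithmeticSemigroup (NonzeroPrime K) where
  primeNorm p := Ideal.absNorm p.1
  two_le_primeNorm p := Nat.ofNat_le_cast.2 (NonzeroPrime.two_le_absNorm p)
  finite_setOf_prod_le x :=
    have := (finite_idealsNormLE K x).to_subtype
    Set.finite_coe_iff.1 (Finite.of_equiv _ (exponentsEquivIdealsNormLE x).symm)

lemma norm_idealSemigroup (f : NonzeroPrime K →₀ ℕ) :
    (idealSemigroup K).norm f = Ideal.absNorm (idealOfExponents f) :=
  (absNorm_idealOfExponents f).symm

lemma count_idealSemigroup (x : ℝ) :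
    (idealSemigroup K).count x = Nat.card (idealsNormLE K x) := by
  rw [← Nat.card_congr (exponentsEquivIdealsNormLE x), ArithmeticSemigroup.count,
    ArithmeticSemigroup.elementsLE,
    ← Set.ncard_eq_toFinset_card _ ((idealSemigroup K).finite_setOf_prod_le x)]
  rfl

lemma primeInvSum_idealSemigroup (x : ℝ) :
    (idealSemigroup K).primeInvSum x =
      ∑ᶠ p ∈ {p : Ideal (𝓞 K) | p.IsPrime ∧ p ≠ ⊥ ∧ (Ideal.absNorm p : ℝ) ≤ x},
        1 / (Ideal.absNorm p : ℝ) := by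
  rw [ArithmeticSemigroup.primeInvSum, ← finsum_mem_finset_eq_sum]
  refine finsum_mem_eq_of_bijOn Subtype.val ⟨?_, Subtype.val_injective.injOn, ?_⟩ fun _ _ => rfl
  · exact fun p hp => ⟨p.2.1, p.2.2, (idealSemigroup K).mem_primesLE.1 hp⟩
  · rintro p ⟨hp, hp0, hle⟩
    exact ⟨⟨p, hp, hp0⟩, (idealSemigroup K).mem_primesLE.2 hle, rfl⟩

lemma hfullOmegaSum_idealSemigroup (h : ℕ) (x : ℝ) :
    (idealSemigroup K).hfullOmegaSum h x =
      ∑ᶠ I ∈ {I : Ideal (𝓞 K) | I ≠ ⊥ ∧ HFullI h I ∧ (Ideal.absNorm I : ℝ) ≤ x},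
        (omegaK I : ℝ) := by
  classical
  have hmem (f : NonzeroPrime K →₀ ℕ) : f ∈ (idealSemigroup K).elementsLE x ↔
      (Ideal.absNorm (idealOfExponents f) : ℝ) ≤ x := by
    rw [ArithmeticSemigroup.mem_elementsLE, norm_idealSemigroup]
  rw [ArithmeticSemigroup.hfullOmegaSum, ← finsum_mem_finset_eq_sum]
  refine finsum_mem_eq_of_bijOn idealOfExponents
    ⟨fun f hf => ?_, idealOfExponents_injective.injOn, ?_⟩
    fun f _ => by rw [omegaK_idealOfExponents]
  · obtain ⟨hle, hfull⟩ := Finset.mem_filter.1 hf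
    exact ⟨idealOfExponents_ne_bot f, hFullI_idealOfExponents.2 hfull, (hmem f).1 hle⟩
  · rintro I ⟨hI, hfull, hle⟩
    obtain ⟨f, rfl⟩ := exists_idealOfExponents_eq I hI
    exact ⟨f, Finset.mem_filter.2 ⟨(hmem f).2 hle, hFullI_idealOfExponents.1 hfull⟩, rfl⟩

variable (K) in
lemma exists_axiomA_idealSemigroup : ∃ θ C, (idealSemigroup K).AxiomA (kappaK K) θ C := by
  have hn : (0 : ℝ) < finrank ℚ K := Nat.cast_pos.2 finrank_pos
  -- For `K = ℚ` the true exponent is `0`, whereas Axiom A asks for a positive one.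
  refine ⟨1 - 1 / (finrank ℚ K + 1), ArithmeticSemigroup.exists_axiomA _ (kappaK_pos K)
    (sub_pos.2 ?_) (sub_lt_self _ (by positivity)) ?_⟩
  · rw [div_lt_one (by positivity)]
    linarith
  · simp_rw [count_idealSemigroup]
    refine (card_idealsNormLE_sub_isBigO K).trans (IsBigO.of_bound' ?_)
    filter_upwards [eventually_ge_atTop 1] with s hs
    have hs0 : 0 ≤ s := zero_le_one.trans hs
    rw [Real.norm_of_nonneg (Real.rpow_nonneg hs0 _), Real.norm_of_nonneg (Real.rpow_nonneg hs0 _)]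
    gcongr
    linarith

lemma NonzeroPrime.dvd_span_primorial {p : NonzeroPrime K} {n : ℕ} (hn : Ideal.absNorm p.1 ≤ n) :
    p.1 ∣ Ideal.span {(primorial n : 𝓞 K)} := by
  have := p.2.1
  have : NeZero p.1 := ⟨p.2.2⟩
  set q := Ideal.absNorm (p.1.under ℤ)
  have hqp : (q : 𝓞 K) ∈ p.1 := by exact_mod_cast Int.absNorm_under_mem p.1
  have hqle : q ≤ n := (Nat.le_of_dvd (two_pos.trans_le (NonzeroPrime.two_le_absNorm p))
    (Int.absNorm_under_dvd_absNorm p.1)).trans hn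
  have hdvd : q ∣ primorial n := (Nat.absNorm_under_prime p.1).dvd_primorial_iff.2 hqle
  exact Ideal.dvd_span_singleton.2 (Ideal.mem_of_dvd p.1 (Nat.cast_dvd_cast hdvd) hqp)

lemma prod_absNorm_le_four_pow {s : Finset (NonzeroPrime K)} {n : ℕ}
    (hs : ∀ p ∈ s, Ideal.absNorm p.1 ≤ n) :
    ∏ p ∈ s, Ideal.absNorm p.1 ≤ (4 ^ n) ^ finrank ℤ (𝓞 K) := by
  have hdvd : ∏ p ∈ s, p.1 ∣ Ideal.span {(primorial n : 𝓞 K)} := by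
    have hmap := Finset.prod_primes_dvd (s := s.map (Function.Embedding.subtype _))
      (Ideal.span {(primorial n : 𝓞 K)})
      (Finset.forall_mem_map.2 fun p _ => NonzeroPrime.prime p)
      (Finset.forall_mem_map.2 fun p hp => NonzeroPrime.dvd_span_primorial (hs p hp))
    rwa [Finset.prod_map] at hmap
  have hnorm : ∏ p ∈ s, Ideal.absNorm p.1 ∣ primorial n ^ finrank ℤ (𝓞 K) := by
    rw [← Ideal.absNorm_span_natCast, ← map_prod]
    exact map_dvd Ideal.absNorm hdvd
  exact (Nat.le_of_dvd (pow_pos (primorial_pos _) _) hnorm).trans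
    (Nat.pow_le_pow_left (primorial_le_four_pow _) _)

variable (K) in
lemma chebyshevBound_idealSemigroup :
    (idealSemigroup K).ChebyshevBound (finrank ℤ (𝓞 K) * Real.log 4) := by
  intro x hx
  have hprod := prod_absNorm_le_four_pow (s := (idealSemigroup K).primesLE x) (n := ⌊x⌋₊)
    fun p hp => Nat.le_floor ((idealSemigroup K).mem_primesLE.1 hp)
  calc ∑ p ∈ (idealSemigroup K).primesLE x, Real.log ((idealSemigroup K).primeNorm p)
    _ = Real.log (∏ p ∈ (idealSemigroup K).primesLE x, (idealSemigroup K).primeNorm p) :=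
      (Real.log_prod fun p _ => ((idealSemigroup K).primeNorm_pos p).ne').symm
    _ ≤ Real.log ((4 ^ ⌊x⌋₊) ^ finrank ℤ (𝓞 K)) :=
      Real.log_le_log (Finset.prod_pos fun p _ => (idealSemigroup K).primeNorm_pos p)
        (by simpa only [idealSemigroup, ← Nat.cast_prod] using mod_cast hprod)
    _ = finrank ℤ (𝓞 K) * (⌊x⌋₊ * Real.log 4) := by rw [Real.log_pow, Real.log_pow]
    _ ≤ finrank ℤ (𝓞 K) * (x * Real.log 4) := by
      gcongr
      exact Nat.floor_le (zero_le_one.trans hx)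
    _ = finrank ℤ (𝓞 K) * Real.log 4 * x := by ring

end IdealSemigroup

theorem first_moment_omega_hfull_ideals_general (K : Type*) [Field K] [NumberField K]
    (h : ℕ) (hh : h ≠ 0) (A : ℝ) (hA : MertensK K A) :
    (fun x : ℝ =>
        (∑ᶠ I ∈ {I : Ideal (𝓞 K) | I ≠ ⊥ ∧ HFullI h I ∧ (Ideal.absNorm I : ℝ) ≤ x},
            (omegaK I : ℝ))
          - kappaK K * gammaK K h * (x ^ (1 / (h : ℝ)) * Real.log (Real.log x))
          - kappaK K * gammaK K h * D1K K h A * x ^ (1 / (h : ℝ)))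
      =O[atTop] fun x : ℝ => x ^ (1 / (h : ℝ)) / Real.log x := by
  obtain ⟨θ, C, hcount⟩ := exists_axiomA_idealSemigroup K
  have hMertens : Tendsto (fun x => (idealSemigroup K).primeInvSum x - Real.log (Real.log x))
      atTop (𝓝 A) := by
    simpa only [primeInvSum_idealSemigroup, MertensK] using hA
  have hmain := hcount.hfullOmegaSum_sub_isBigO (chebyshevBound_idealSemigroup K) hMertens hh
  simp only [hfullOmegaSum_idealSemigroup] at hmain
  exact hmain

/-- First moment of `ω` over `h`-full ideals of a number field. -/
theorem first_moment_omega_hfull_ideals (K : Type*) [Field K] [NumberField K]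
    (h : ℕ) (hh : 2 ≤ h) (A : ℝ) (hA : MertensK K A) :
    (fun x : ℝ =>
        (∑ᶠ I ∈ {I : Ideal (𝓞 K) | I ≠ ⊥ ∧ HFullI h I ∧ (Ideal.absNorm I : ℝ) ≤ x},
            (omegaK I : ℝ))
          - kappaK K * gammaK K h * (x ^ (1 / (h : ℝ)) * Real.log (Real.log x))
          - kappaK K * gammaK K h * D1K K h A * x ^ (1 / (h : ℝ)))
      =O[atTop] fun x : ℝ => x ^ (1 / (h : ℝ)) / Real.log x :=
  first_moment_omega_hfull_ideals_general K h (by lia) A hA
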